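/- arXiv:1810.05069 — 3 statements merged into one kernel-verified Lean document; each statement's English description precedes it below -/
import Mathlib

section
/- Let Ω ⊂ ℂ be a nonempty open set. Then the Cauchy-Riemann operator ∂̄ = (1/2)(∂₁ + i∂₂) : C^∞(Ω, ℂ) → C^∞(Ω, ℂ) is surjective: for every f ∈ C^∞(Ω, ℂ) there exists u ∈ C^∞(Ω, ℂ) with ∂̄u = f on Ω. -/
open Complex

/-- Real partial derivative of `f : ℂ → ℂ` in the direction `v`. -/
noncomputable def pd (v : ℂ) (f : ℂ → ℂ) : ℂ → ℂ := fun z => fderiv ℝ f z v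

/-- The Cauchy-Riemann operator `∂̄ = (1/2)(∂₁ + i ∂₂)`. -/
noncomputable def dbar (f : ℂ → ℂ) : ℂ → ℂ := fun z => (1 / 2 : ℂ) * (pd 1 f z + I * pd I f z)
open MeasureTheory Set Filter Topology

lemma fderiv_dbar_split (A : ℂ →L[ℝ] ℂ) (v : ℂ) :
    A v + I * A (I * v) = (A 1 + I * A I) * (starRingEnd ℂ) v := by
  have h : ∀ w : ℂ, A w = w.re * A 1 + w.im * A I := by
    intro w
    have : w = w.re • (1 : ℂ) + w.im • I := by
      apply Complex.ext <;> simp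
    conv_lhs => rw [this]
    rw [map_add, map_smul, map_smul]
    simp
  rw [h v, h (I * v)]
  have hv : (starRingEnd ℂ) v = v.re - v.im * I := by
    apply Complex.ext <;> simp
  rw [hv]
  simp only [mul_re, mul_im, I_re, I_im]
  push_cast
  ring_nf
  simp only [I_sq]
  ring

lemma locInt_inv : LocallyIntegrable (fun t : ℂ => t⁻¹) volume := by
  apply MeasureTheory.locallyIntegrable_of_norm_le_rpow (C := 1) (α := 1)
  · simp
  · filter_upwards with x
    rw [Real.rpow_neg_one]; simp
  · exact (measurable_inv).aestronglyMeasurable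
  · simp

lemma polar_identity (g : ℂ → ℂ) (hg : ContDiff ℝ 1 g) (hc : HasCompactSupport g) (z : ℂ) :
    ∫ t : ℂ, t⁻¹ * dbar g (z - t) = Real.pi * g z := by
  have hDc : Continuous (fderiv ℝ g) := hg.continuous_fderiv one_ne_zero
  have hD : HasCompactSupport (fderiv ℝ g) := hc.fderiv ℝ
  -- radius
  obtain ⟨R, hRpos, hR⟩ : ∃ R : ℝ, 0 < R ∧ ∀ t : ℂ, R ≤ ‖t‖ → z - t ∉ tsupport g := by
    obtain ⟨M, hM0, hM⟩ := hc.isCompact.isBounded.exists_pos_norm_lt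
    refine ⟨M + ‖z‖, by positivity, fun t ht h => ?_⟩
    have h1 := hM _ h
    have h2 : ‖t‖ ≤ ‖z - t‖ + ‖z‖ := by
      have := norm_sub_le z (z - t)
      simp only [sub_sub_cancel] at this
      linarith
    linarith
  have hDR : ∀ t : ℂ, R ≤ ‖t‖ → fderiv ℝ g (z - t) = 0 := by
    intro t ht
    by_contra h
    exact hR t ht (support_fderiv_subset ℝ h)
  have hgR : ∀ t : ℂ, R ≤ ‖t‖ → g (z - t) = 0 := fun t ht => image_eq_zero_of_notMem_tsupport (hR t ht)
  set e : ℝ → ℂ := fun θ => Real.cos θ + Real.sin θ * I with he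
  have hec : Continuous e := by fun_prop
  have hen : ∀ θ, ‖e θ‖ = 1 := by
    intro θ
    simp only [he]
    have := Complex.norm_exp_ofReal_mul_I θ
    rw [Complex.exp_mul_I] at this
    simpa using this
  have hed : ∀ θ : ℝ, HasDerivAt e (I * e θ) θ := by
    intro θ
    have h1 := (Real.hasDerivAt_cos θ).ofReal_comp
    have h2 := (Real.hasDerivAt_sin θ).ofReal_comp.mul_const I
    refine (h1.add h2).congr_deriv ?_
    simp only [he]
    push_cast
    ring_nf
    simp only [I_sq]; ring
  set P : ℝ × ℝ → ℂ := fun p => fderiv ℝ g (z - p.1 * e p.2) (e p.2) with hP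
  set Q : ℝ × ℝ → ℂ := fun p => fderiv ℝ g (z - p.1 * e p.2) (I * e p.2) with hQ
  have hPc : Continuous P := by
    apply Continuous.clm_apply
    · exact hDc.comp (by fun_prop)
    · fun_prop
  have hQc : Continuous Q := by
    apply Continuous.clm_apply
    · exact hDc.comp (by fun_prop)
    · fun_prop
  have hnorm : ∀ (r θ : ℝ), R ≤ r → R ≤ ‖(r : ℂ) * e θ‖ := by
    intro r θ h
    rw [norm_mul, hen, mul_one, Complex.norm_real, Real.norm_eq_abs]
    exact h.trans (le_abs_self r)
  have step1 : ∫ t : ℂ, t⁻¹ * dbar g (z - t) =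
      ∫ p in Ioc (0:ℝ) R ×ˢ Ioc (-Real.pi) Real.pi, ((1/2 : ℂ) * (P p + I * Q p)) := by
    rw [← Complex.integral_comp_polarCoord_symm]
    have h1 : ∀ p ∈ polarCoord.target, p.1 • ((Complex.polarCoord.symm p)⁻¹ * dbar g (z - Complex.polarCoord.symm p)) = (1/2 : ℂ) * (P p + I * Q p) := by
      rintro ⟨r, θ⟩ hp
      have hr : (0:ℝ) < r := hp.1
      have hr' : (r : ℂ) ≠ 0 := by exact_mod_cast hr.ne'
      have hsym : Complex.polarCoord.symm (r, θ) = r * e θ := by simp [he]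
      rw [hsym]
      have := fderiv_dbar_split (fderiv ℝ g (z - r * e θ)) (e θ)
      simp only [hP, hQ, this]
      have he0 : e θ ≠ 0 := by
        intro h; have := hen θ; rw [h] at this; simp at this
      have hinv : (starRingEnd ℂ) (e θ) = (e θ)⁻¹ := by
        rw [Complex.inv_def, Complex.normSq_eq_norm_sq, hen]; simp
      rw [hinv]
      simp only [dbar, pd, real_smul]
      field_simp
    rw [setIntegral_congr_fun polarCoord.open_target.measurableSet h1]
    rw [polarCoord_target]
    have h2 : ((Ioi (0:ℝ) ×ˢ Ioo (-Real.pi) Real.pi : Set (ℝ × ℝ))) =ᵐ[volume] (Ioi (0:ℝ) ×ˢ Ioc (-Real.pi) Real.pi : Set (ℝ × ℝ)) := by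
      exact Measure.set_prod_ae_eq (ae_eq_refl _) Ioo_ae_eq_Ioc
    rw [setIntegral_congr_set h2]
    apply setIntegral_eq_of_subset_of_forall_sdiff_eq_zero
    · exact measurableSet_Ioi.prod measurableSet_Ioc
    · exact Set.prod_mono Ioc_subset_Ioi_self le_rfl
    · rintro ⟨r, θ⟩ ⟨⟨ha, hb⟩, h⟩
      have : R ≤ r := by
        by_contra hlt
        exact h ⟨⟨ha, le_of_lt (not_le.mp hlt)⟩, hb⟩
      simp only [hP, hQ, hDR _ (hnorm r θ this)]
      simp
  have hintg : ∀ F : ℝ × ℝ → ℂ, Continuous F →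
      IntegrableOn F (Ioc (0:ℝ) R ×ˢ Ioc (-Real.pi) Real.pi) (volume.prod volume) := by
    intro F hF
    have := (hF.continuousOn (s := Icc (0:ℝ) R ×ˢ Icc (-Real.pi) Real.pi)).integrableOn_compact
      (μ := (volume.prod volume : Measure (ℝ × ℝ))) (isCompact_Icc.prod isCompact_Icc)
    exact this.mono_set (Set.prod_mono Ioc_subset_Icc_self Ioc_subset_Icc_self)
  have hgd : ∀ x, HasFDerivAt g (fderiv ℝ g x) x := fun x => (hg.differentiable one_ne_zero x).hasFDerivAt
  have stepP : ∫ p in Ioc (0:ℝ) R ×ˢ Ioc (-Real.pi) Real.pi, P p = 2 * Real.pi * g z := by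
    have h0 := setIntegral_prod_swap (Ioc (0:ℝ) R) (Ioc (-Real.pi) Real.pi) (μ := volume) (ν := volume) P
    rw [Measure.volume_eq_prod, ← h0, setIntegral_prod]
    · have : ∀ θ : ℝ, ∫ r in Ioc (0:ℝ) R, P (Prod.swap (θ, r)) = g z := by
        intro θ
        rw [← intervalIntegral.integral_of_le hRpos.le]
        have hd : ∀ r ∈ uIcc (0:ℝ) R, HasDerivAt (fun r : ℝ => - g (z - r * e θ)) (P (Prod.swap (θ, r))) r := by
          intro r _
          have h1 : HasDerivAt (fun r : ℝ => z - r * e θ) (-(e θ)) r := by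
            have := ((hasDerivAt_id r).ofReal_comp.mul_const (e θ)).const_sub z
            simpa using this
          have := ((hgd (z - r * e θ)).comp_hasDerivAt r h1).neg
          refine this.congr_deriv ?_
          simp [hP]
        rw [intervalIntegral.integral_eq_sub_of_hasDerivAt hd]
        · rw [hgR _ (hnorm R θ le_rfl)]; simp
        · apply Continuous.intervalIntegrable
          exact hPc.comp (by fun_prop)
      simp only [this]
      simp [Real.pi_pos.le]
      left
      norm_cast
      ring
    · have := (hintg P hPc).swap
      have hh : Continuous (fun p : ℝ × ℝ => P p.swap) := hPc.comp continuous_swap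
      have := (hh.continuousOn (s := Icc (-Real.pi) Real.pi ×ˢ Icc (0:ℝ) R)).integrableOn_compact
        (μ := (volume.prod volume : Measure (ℝ × ℝ))) (isCompact_Icc.prod isCompact_Icc)
      exact this.mono_set (Set.prod_mono Ioc_subset_Icc_self Ioc_subset_Icc_self)
  have stepQ : ∫ p in Ioc (0:ℝ) R ×ˢ Ioc (-Real.pi) Real.pi, Q p = 0 := by
    rw [Measure.volume_eq_prod, setIntegral_prod _ (hintg Q hQc)]
    apply setIntegral_eq_zero_of_forall_eq_zero
    intro r hr
    have hr' : (r : ℂ) ≠ 0 := by exact_mod_cast hr.1.ne'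
    rw [← intervalIntegral.integral_of_le (by linarith [Real.pi_pos])]
    have hd : ∀ θ ∈ uIcc (-Real.pi) Real.pi, HasDerivAt (fun θ : ℝ => - (r:ℂ)⁻¹ * g (z - r * e θ)) (Q (r, θ)) θ := by
      intro θ _
      have h1 : HasDerivAt (fun θ : ℝ => z - r * e θ) (-(r * (I * e θ))) θ :=
        ((hed θ).const_mul (r : ℂ)).const_sub z
      have := ((hgd (z - r * e θ)).comp_hasDerivAt θ h1).const_mul (-(r:ℂ)⁻¹)
      refine this.congr_deriv ?_
      rw [map_neg, ← real_smul (x := r) (z := I * e θ), map_smul, real_smul]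
      simp only [hQ]
      field_simp
    rw [intervalIntegral.integral_eq_sub_of_hasDerivAt hd]
    · simp [he]
    · apply Continuous.intervalIntegrable
      exact hQc.comp (by fun_prop)
  rw [step1, integral_const_mul, integral_add, integral_const_mul, stepP, stepQ]
  · ring
  · exact hintg P hPc
  · exact hintg (fun p => I * Q p) (by fun_prop)

/-- The Cauchy transform. -/
noncomputable def cauchyT (g : ℂ → ℂ) : ℂ → ℂ :=
  fun z => (Real.pi : ℂ)⁻¹ * (convolution (fun t : ℂ => t⁻¹) g (ContinuousLinearMap.mul ℝ ℂ) volume) z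

lemma cauchyT_contDiff (g : ℂ → ℂ) (hg : ContDiff ℝ (⊤ : ℕ∞) g) (hc : HasCompactSupport g) :
    ContDiff ℝ (⊤ : ℕ∞) (cauchyT g) := by
  exact contDiff_const.mul (hc.contDiff_convolution_right _ locInt_inv hg)

lemma cauchyT_dbar (g : ℂ → ℂ) (hg : ContDiff ℝ (⊤ : ℕ∞) g) (hc : HasCompactSupport g) (z : ℂ) :
    dbar (cauchyT g) z = g z := by
  have hg1 : ContDiff ℝ 1 g := hg.of_le (by exact_mod_cast le_top)
  have hDc : Continuous (fderiv ℝ g) := hg1.continuous_fderiv one_ne_zero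
  have hD : HasCompactSupport (fderiv ℝ g) := hc.fderiv ℝ
  have h := (hc.hasFDerivAt_convolution_right (ContinuousLinearMap.mul ℝ ℂ) locInt_inv hg1 z).const_mul ((Real.pi : ℂ)⁻¹)
  have h' : fderiv ℝ (cauchyT g) z = _ := h.fderiv
  have hv : ∀ v : ℂ, Integrable (fun t : ℂ => t⁻¹ * fderiv ℝ g (z - t) v) := by
    intro v
    have hcv : HasCompactSupport (fun a => fderiv ℝ g a v) := by
      apply hD.comp_left (g := fun A : ℂ →L[ℝ] ℂ => A v); simp
    exact hcv.convolutionExists_right (ContinuousLinearMap.mul ℝ ℂ) locInt_inv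
      (hDc.clm_apply continuous_const) z
  have hpd : ∀ v, pd v (cauchyT g) z = (Real.pi : ℂ)⁻¹ * ∫ t : ℂ, t⁻¹ * fderiv ℝ g (z - t) v := by
    intro v
    simp only [pd, h']
    rw [smul_apply, convolution_precompR_apply _ locInt_inv hD hDc]
    rfl
  have hp := polar_identity g hg1 hc z
  have : ∫ t : ℂ, t⁻¹ * dbar g (z - t) = (1/2 : ℂ) * ((∫ t : ℂ, t⁻¹ * fderiv ℝ g (z - t) 1) + I * ∫ t : ℂ, t⁻¹ * fderiv ℝ g (z - t) I) := by
    rw [← integral_const_mul, ← integral_add (hv 1) ((hv I).const_mul I), ← integral_const_mul]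
    congr 1
    ext t
    simp only [dbar, pd]
    ring
  rw [hp] at this
  simp only [dbar]
  rw [hpd, hpd]
  have hpi : (Real.pi : ℂ) ≠ 0 := by exact_mod_cast Real.pi_ne_zero
  have h3 : g z = (Real.pi : ℂ)⁻¹ * (Real.pi * g z) := by field_simp
  rw [h3, this]
  ring

lemma cauchyT_eq (g : ℂ → ℂ) (z : ℂ) :
    cauchyT g z = (Real.pi : ℂ)⁻¹ * ∫ w : ℂ, (z - w)⁻¹ * g w := by
  simp only [cauchyT]
  rw [convolution_eq_swap]; rfl

/-- Compact exhaustion of an open set. -/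
def Kx (Ω : Set ℂ) (n : ℕ) : Set ℂ :=
  {z | ‖z‖ ≤ n ∧ ∀ b ∉ Ω, 1 / ((n : ℝ) + 1) ≤ ‖z - b‖}

lemma Kx_closed (Ω : Set ℂ) (n : ℕ) : IsClosed (Kx Ω n) := by
  have : Kx Ω n = {z | ‖z‖ ≤ n} ∩ ⋂ b ∈ Ωᶜ, {z | 1 / ((n : ℝ) + 1) ≤ ‖z - b‖} := by
    ext z; simp [Kx]
  rw [this]
  apply IsClosed.inter
  · exact isClosed_le continuous_norm continuous_const
  · apply isClosed_biInter
    intro b _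
    exact isClosed_le continuous_const (by fun_prop)

lemma Kx_compact (Ω : Set ℂ) (n : ℕ) : IsCompact (Kx Ω n) := by
  apply (isCompact_closedBall (0 : ℂ) n).of_isClosed_subset (Kx_closed Ω n)
  intro z hz
  simpa using hz.1

lemma Kx_subset (Ω : Set ℂ) (n : ℕ) : Kx Ω n ⊆ Ω := by
  intro z hz
  by_contra h
  have := hz.2 z h
  simp only [sub_self, norm_zero] at this
  have : (0:ℝ) < 1 / ((n : ℝ) + 1) := by positivity
  linarith

lemma Kx_interior (Ω : Set ℂ) (n : ℕ) : Kx Ω n ⊆ interior (Kx Ω (n + 1)) := by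
  intro z hz
  rw [mem_interior_iff_mem_nhds, Metric.mem_nhds_iff]
  have hlt : (1:ℝ) / ((n:ℝ) + 1 + 1) < 1 / ((n:ℝ) + 1) := by
    apply one_div_lt_one_div_of_lt <;> first | positivity | linarith
  have hle : (1:ℝ) / ((n:ℝ) + 1) ≤ 1 := by
    rw [div_le_one (by positivity)]; linarith [(Nat.cast_nonneg n : (0:ℝ) ≤ n)]
  have hp : (0:ℝ) < 1 / ((n:ℝ) + 1 + 1) := by positivity
  refine ⟨1 / ((n:ℝ) + 1) - 1 / ((n:ℝ) + 1 + 1), by linarith, ?_⟩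
  intro y hy
  rw [mem_ball_iff_norm] at hy
  constructor
  · have : ‖y‖ ≤ ‖y - z‖ + ‖z‖ := by simpa using norm_add_le (y - z) z
    have := hz.1
    push_cast
    linarith
  · intro b hb
    have h1 := hz.2 b hb
    have h2 : ‖z - b‖ ≤ ‖y - z‖ + ‖y - b‖ := by
      have := norm_sub_le (y - b) (y - z)
      simp only [sub_sub_sub_cancel_left] at this
      linarith
    push_cast
    linarith

lemma Kx_mono (Ω : Set ℂ) : Monotone (Kx Ω) :=
  monotone_nat_of_le_succ fun n => (Kx_interior Ω n).trans interior_subset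

lemma Kx_exhaust (Ω : Set ℂ) (hΩ : IsOpen Ω) (z : ℂ) (hz : z ∈ Ω) : ∃ n, z ∈ Kx Ω n := by
  obtain ⟨ε, hε, hb⟩ := Metric.isOpen_iff.mp hΩ z hz
  obtain ⟨n, hn⟩ := exists_nat_gt (max ‖z‖ (1 / ε))
  refine ⟨n, (le_max_left _ _).trans hn.le, fun b hb' => ?_⟩
  have h1 : ε ≤ ‖z - b‖ := by
    by_contra h
    apply hb' (hb _)
    rw [mem_ball_iff_norm, norm_sub_rev]
    exact not_le.mp h
  refine le_trans ?_ h1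
  have h2 : 1 / ε < n := (le_max_right _ _).trans_lt hn
  rw [div_le_iff₀ (by positivity)]
  rw [div_lt_iff₀ hε] at h2
  nlinarith

lemma approx_kernel (Ω : Set ℂ) (n : ℕ) (w : ℂ) (hw : w ∉ Kx Ω n) (ε : ℝ) (hε : 0 < ε) :
    ∃ p : ℂ → ℂ, DifferentiableOn ℂ p Ω ∧ ∀ z ∈ Kx Ω n, ‖(z - w)⁻¹ - p z‖ ≤ ε := by
  have key : ∀ q η : ℝ, 0 ≤ q → q < 1 → 0 < η → ∃ N : ℕ, q ^ N / η ≤ ε := by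
    intro q η h0 h1 hη
    obtain ⟨N, hN⟩ := exists_pow_lt_of_lt_one (mul_pos hε hη) h1
    exact ⟨N, by rw [div_le_iff₀ hη]; exact hN.le⟩
  by_cases hn : ‖w‖ ≤ n
  · have : ∃ b ∉ Ω, ‖w - b‖ < 1 / ((n : ℝ) + 1) := by
      by_contra! h
      exact hw ⟨hn, h⟩
    obtain ⟨b, hb, hwb⟩ := this
    set δ : ℝ := 1 / ((n : ℝ) + 1) with hδ
    have hδ0 : 0 < δ := by positivity
    obtain ⟨N, hN⟩ := key (‖w - b‖ / δ) (δ - ‖w - b‖) (by positivity)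
      (by rw [div_lt_one hδ0]; exact hwb) (by linarith)
    refine ⟨fun z => (z - b)⁻¹ * ∑ k ∈ Finset.range N, ((w - b) * (z - b)⁻¹) ^ k, ?_, ?_⟩
    · intro z hz
      have hzb : z - b ≠ 0 := by
        intro h; rw [sub_eq_zero] at h; exact hb (h ▸ hz)
      have hi : DifferentiableAt ℂ (fun z : ℂ => (z - b)⁻¹) z :=
        (differentiableAt_id.sub_const b).inv hzb
      apply DifferentiableAt.differentiableWithinAt
      fun_prop
    · intro z hz
      have h1 := hz.2 b hb
      have hzb : z - b ≠ 0 := by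
        rw [← norm_pos_iff]; linarith
      have h2 : δ - ‖w - b‖ ≤ ‖z - w‖ := by
        have := norm_sub_norm_le (z - b) (w - b)
        simp only [sub_sub_sub_cancel_right] at this
        linarith
      have hzw : z - w ≠ 0 := by
        rw [← norm_pos_iff]; linarith
      have hx : (w - b) * (z - b)⁻¹ ≠ 1 := by
        intro h
        apply hzw
        field_simp at h
        linear_combination -h
      have e : (z - w)⁻¹ - (z - b)⁻¹ * ∑ k ∈ Finset.range N, ((w - b) * (z - b)⁻¹) ^ k
          = ((w - b) * (z - b)⁻¹) ^ N * (z - w)⁻¹ := by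
        have h3 := mul_neg_geom_sum ((w - b) * (z - b)⁻¹) N
        have h4 : 1 - (w - b) * (z - b)⁻¹ = (z - w) * (z - b)⁻¹ := by
          field_simp; ring
        rw [h4] at h3
        have h5 : (z - b)⁻¹ * ∑ k ∈ Finset.range N, ((w - b) * (z - b)⁻¹) ^ k
          = (z - w)⁻¹ * (1 - ((w - b) * (z - b)⁻¹) ^ N) := by
          rw [← h3, mul_assoc, inv_mul_cancel_left₀ hzw]
        rw [h5]; ring
      rw [e, norm_mul, norm_pow, norm_mul, norm_inv, norm_inv]
      refine le_trans ?_ hN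
      rw [div_eq_mul_inv, div_eq_mul_inv]
      gcongr
  · push Not at hn
    have hw0 : w ≠ 0 := by
      rintro rfl
      simp only [norm_zero] at hn
      linarith [(Nat.cast_nonneg n : (0:ℝ) ≤ n)]
    have hwp : 0 < ‖w‖ := norm_pos_iff.mpr hw0
    obtain ⟨N, hN⟩ := key (n / ‖w‖) (‖w‖ - n) (by positivity)
      (by rw [div_lt_one hwp]; exact hn) (by linarith)
    refine ⟨fun z => - (w⁻¹ * ∑ k ∈ Finset.range N, (z * w⁻¹) ^ k), ?_, ?_⟩
    · apply Differentiable.differentiableOn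
      fun_prop
    · intro z hz
      have h1 := hz.1
      have h2 : ‖w‖ - n ≤ ‖z - w‖ := by
        have := norm_sub_norm_le w z
        rw [norm_sub_rev w z] at this
        linarith
      have hzw : z - w ≠ 0 := by
        rw [← norm_pos_iff]; linarith
      have e : (z - w)⁻¹ - -(w⁻¹ * ∑ k ∈ Finset.range N, (z * w⁻¹) ^ k)
          = (z * w⁻¹) ^ N * (z - w)⁻¹ := by
        have h3 := mul_neg_geom_sum (z * w⁻¹) N
        have h4 : 1 - z * w⁻¹ = -((z - w) * w⁻¹) := by
          field_simp; ring
        rw [h4] at h3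
        have h5 : w⁻¹ * ∑ k ∈ Finset.range N, (z * w⁻¹) ^ k
          = -((z - w)⁻¹ * (1 - (z * w⁻¹) ^ N)) := by
          rw [← h3, neg_mul, mul_assoc, mul_neg, inv_mul_cancel_left₀ hzw, neg_neg]
        rw [h5]; ring
      rw [e, norm_mul, norm_pow, norm_mul, norm_inv, norm_inv]
      refine le_trans ?_ hN
      rw [div_eq_mul_inv, div_eq_mul_inv]
      gcongr

lemma approx_cauchyT (Ω K L : Set ℂ) (hK : IsCompact K) (hL : IsCompact L) (hKL : Disjoint K L)
    (hKΩ : K ⊆ Ω) (g : ℂ → ℂ) (hg : Continuous g) (hgL : ∀ w ∉ L, g w = 0)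
    (happ : ∀ w ∈ L, ∀ ε > 0, ∃ p : ℂ → ℂ, DifferentiableOn ℂ p Ω ∧ ∀ z ∈ K, ‖(z - w)⁻¹ - p z‖ ≤ ε)
    (ε : ℝ) (hε : 0 < ε) :
    ∃ p : ℂ → ℂ, DifferentiableOn ℂ p Ω ∧ ∀ z ∈ K, ‖cauchyT g z - p z‖ ≤ ε := by
  have : CompactSpace K := isCompact_iff_compactSpace.mp hK
  have : CompactSpace L := isCompact_iff_compactSpace.mp hL
  let S : Submodule ℂ C(K, ℂ) :=
    { carrier := {φ | ∃ p : ℂ → ℂ, DifferentiableOn ℂ p Ω ∧ ∀ z : K, φ z = p z}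
      add_mem' := by
        rintro a b ⟨p, hp, h1⟩ ⟨q, hq, h2⟩
        exact ⟨fun z => p z + q z, hp.add hq, fun z => by simp [h1, h2]⟩
      zero_mem' := ⟨fun _ => 0, differentiableOn_const 0, fun z => by simp⟩
      smul_mem' := by
        rintro c a ⟨p, hp, h1⟩
        exact ⟨fun z => c * p z, hp.const_mul c, fun z => by simp [h1]⟩ }
  let T : Submodule ℂ C(K, ℂ) := S.topologicalClosure
  have hT : ∀ φ : C(K, ℂ), φ ∈ T ↔ ∀ ε > 0, ∃ p : ℂ → ℂ, DifferentiableOn ℂ p Ω ∧ ∀ z : K, ‖φ z - p z‖ ≤ ε := by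
    intro φ
    constructor
    · intro h ε hε
      obtain ⟨s, ⟨p, hp, hs⟩, hd⟩ := Metric.mem_closure_iff.mp (show φ ∈ closure (S : Set C(K, ℂ)) from h) ε hε
      refine ⟨p, hp, fun z => ?_⟩
      rw [← hs z, ← dist_eq_norm]
      exact (ContinuousMap.dist_apply_le_dist z).trans hd.le
    · intro h
      refine Metric.mem_closure_iff.mpr fun ε hε => ?_
      obtain ⟨p, hp, hz⟩ := h (ε / 2) (half_pos hε)
      refine ⟨⟨fun z : K => p z, (hp.continuousOn.mono hKΩ).domRestrict⟩, ⟨p, hp, fun z => rfl⟩, ?_⟩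
      refine lt_of_le_of_lt ?_ (half_lt_self hε)
      rw [ContinuousMap.dist_le (half_pos hε).le]
      intro z
      rw [dist_eq_norm]
      exact hz z
  let G : C(L, C(K, ℂ)) := ContinuousMap.curry
    ⟨fun x : L × K => ((x.2 : ℂ) - (x.1 : ℂ))⁻¹, by
      apply Continuous.inv₀ (by fun_prop)
      rintro ⟨w, z⟩ h
      rw [sub_eq_zero] at h
      exact Set.disjoint_left.mp hKL z.2 (h ▸ w.2)⟩
  have hGT : ∀ w : L, G w ∈ T := by
    intro w
    rw [hT]
    intro ε hε
    obtain ⟨p, hp, h⟩ := happ w w.2 ε hε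
    exact ⟨p, hp, fun z => h z z.2⟩
  let ν : Measure L := Measure.comap Subtype.val volume
  have : IsFiniteMeasure ν := by
    constructor
    rw [Measure.comap_apply _ Subtype.val_injective (fun s hs => hL.measurableSet.subtype_image hs) _ MeasurableSet.univ]
    simpa using hL.measure_lt_top
  let H : L → C(K, ℂ) := fun w => g w • G w
  have hHc : Continuous H := by
    exact (hg.comp continuous_subtype_val).smul G.continuous
  have hHi : Integrable H ν := hHc.integrable_of_hasCompactSupport (HasCompactSupport.of_compactSpace H)
  have hIT : ∫ w, H w ∂ν ∈ T := by
    have : IsClosed (T : Set C(K, ℂ)) := S.isClosed_topologicalClosure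
    have h1 := T.mkQL.integral_comp_comm hHi
    have h2 : ∀ w, T.mkQL (H w) = 0 := by
      intro w
      have : H w ∈ T := T.smul_mem (g w) (hGT w)
      exact (Submodule.Quotient.mk_eq_zero T).mpr this
    simp only [h2, integral_zero] at h1
    have h3 := h1.symm
    simpa using h3
  have hval : ∀ z : K, (∫ w, H w ∂ν) z = ∫ w : ℂ, ((z:ℂ) - w)⁻¹ * g w := by
    intro z
    have h1 := (ContinuousMap.evalCLM ℂ z : C(K, ℂ) →L[ℂ] ℂ).integral_comp_comm hHi
    have h2 : (∫ w, H w ∂ν) z = ∫ w : L, ((z:ℂ) - w)⁻¹ * g w ∂ν := by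
      refine h1.symm.trans ?_
      congr 1
      ext w
      simp [H, G, mul_comm]
    rw [h2, integral_subtype_comap hL.measurableSet (fun w : ℂ => ((z:ℂ) - w)⁻¹ * g w)]
    apply setIntegral_eq_integral_of_forall_compl_eq_zero
    intro w hw
    rw [hgL w hw, mul_zero]
  have hmem : (Real.pi : ℂ)⁻¹ • ∫ w, H w ∂ν ∈ T := T.smul_mem _ hIT
  obtain ⟨p, hp, h⟩ := (hT _).mp hmem ε hε
  refine ⟨p, hp, fun z hz => ?_⟩
  have := h ⟨z, hz⟩
  rw [cauchyT_eq, ← hval ⟨z, hz⟩]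
  exact this

lemma dbar_add {a b : ℂ → ℂ} {z : ℂ} (ha : DifferentiableAt ℝ a z) (hb : DifferentiableAt ℝ b z) :
    dbar (fun z => a z + b z) z = dbar a z + dbar b z := by
  simp only [dbar, pd]
  rw [fderiv_fun_add ha hb]
  simp only [add_apply]
  ring

lemma dbar_sub {a b : ℂ → ℂ} {z : ℂ} (ha : DifferentiableAt ℝ a z) (hb : DifferentiableAt ℝ b z) :
    dbar (fun z => a z - b z) z = dbar a z - dbar b z := by
  simp only [dbar, pd]
  rw [fderiv_fun_sub ha hb]
  simp only [sub_apply]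
  ring

lemma dbar_holo {a : ℂ → ℂ} {z : ℂ} (ha : DifferentiableAt ℂ a z) : dbar a z = 0 := by
  have := (differentiableAt_complex_iff_differentiableAt_real.mp ha).2
  simp only [dbar, pd]
  rw [this, smul_eq_mul, ← mul_assoc, I_mul_I]
  ring

lemma holo_of_dbar {a : ℂ → ℂ} {z : ℂ} (ha : DifferentiableAt ℝ a z) (h : dbar a z = 0) :
    DifferentiableAt ℂ a z := by
  rw [differentiableAt_complex_iff_differentiableAt_real]
  refine ⟨ha, ?_⟩
  simp only [dbar, pd] at h
  have h2 : fderiv ℝ a z 1 + I * fderiv ℝ a z I = 0 := by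
    linear_combination 2 * h
  rw [smul_eq_mul]
  linear_combination (-I) * h2 + (fderiv ℝ a z I) * I_mul_I

lemma holo_smooth {a : ℂ → ℂ} {U : Set ℂ} (hU : IsOpen U) (ha : DifferentiableOn ℂ a U) :
    ContDiffOn ℝ (⊤ : ℕ∞) a U :=
  (ha.contDiffOn hU).restrict_scalars ℝ

lemma cutoff_smooth (Ω K : Set ℂ) (hΩ : IsOpen Ω) (hK : IsCompact K) (hKΩ : K ⊆ Ω) (f : ℂ → ℂ)
    (hf : ContDiffOn ℝ (⊤ : ℕ∞) f Ω) (χ : ℂ → ℝ) (hχ : ContDiff ℝ (⊤ : ℕ∞) χ)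
    (h0 : ∀ z ∉ K, χ z = 0) :
    ContDiff ℝ (⊤ : ℕ∞) (fun z => (χ z : ℂ) * f z) ∧
      HasCompactSupport (fun z => (χ z : ℂ) * f z) := by
  constructor
  · rw [contDiff_iff_contDiffAt]
    intro z
    by_cases hz : z ∈ Ω
    · apply ContDiffAt.mul
      · exact (Complex.ofRealCLM.contDiff.comp hχ).contDiffAt
      · exact hf.contDiffAt (hΩ.mem_nhds hz)
    · have : (fun z => (χ z : ℂ) * f z) =ᶠ[𝓝 z] fun _ => 0 := by
        filter_upwards [hK.isClosed.isOpen_compl.mem_nhds (fun h => hz (hKΩ h))] with y hy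
        simp [h0 y hy]
      exact contDiffAt_const.congr_of_eventuallyEq this
  · apply HasCompactSupport.intro hK
    intro z hz
    simp [h0 z hz]

open scoped Manifold ContDiff in
lemma exists_cutoff (K K' : Set ℂ) (hK : IsClosed K) (h : K ⊆ interior K') :
    ∃ χ : ℂ → ℝ, ContDiff ℝ (⊤ : ℕ∞) χ ∧ (∀ z ∈ K, χ z = 1) ∧ ∀ z ∉ K', χ z = 0 := by
  obtain ⟨χ, h1, h2, -⟩ := exists_contMDiffMap_one_nhds_of_subset_interior 𝓘(ℝ, ℂ) (n := (⊤ : ℕ∞)) hK h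
  exact ⟨χ, χ.contMDiff.contDiff, fun z hz => h1.self_of_nhdsSet z hz, h2⟩

/-- for any nonempty open `Ω ⊆ ℂ`, the Cauchy-Riemann operator
`∂̄ : C^∞(Ω, ℂ) → C^∞(Ω, ℂ)` is surjective. -/
theorem stmt12 (Ω : Set ℂ) (hΩ : IsOpen Ω) (hne : Ω.Nonempty)
    (f : ℂ → ℂ) (hf : ContDiffOn ℝ (⊤ : ℕ∞) f Ω) :
    ∃ u : ℂ → ℂ, ContDiffOn ℝ (⊤ : ℕ∞) u Ω ∧ ∀ z ∈ Ω, dbar u z = f z := by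
  have hψ := fun n : ℕ => exists_cutoff (Kx Ω (n + 1)) (Kx Ω (n + 2)) (Kx_closed _ _) (Kx_interior _ _)
  choose ψ hψs hψ1 hψ0 using hψ
  set g0 : ℂ → ℂ := fun z => (ψ 0 z : ℂ) * f z with hg0
  set g : ℕ → ℂ → ℂ := fun n z => ((ψ (n + 1) z - ψ n z : ℝ) : ℂ) * f z with hg
  obtain ⟨hg0s, hg0c⟩ := cutoff_smooth Ω _ hΩ (Kx_compact Ω 2) (Kx_subset Ω 2) f hf (ψ 0) (hψs 0) (hψ0 0)
  have hgs : ∀ n, ContDiff ℝ (⊤ : ℕ∞) (g n) ∧ HasCompactSupport (g n) := by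
    intro n
    refine cutoff_smooth Ω _ hΩ (Kx_compact Ω (n + 3)) (Kx_subset Ω _) f hf
      (fun z => ψ (n + 1) z - ψ n z) ((hψs (n+1)).sub (hψs n)) ?_
    intro z hz
    have h1 := hψ0 (n + 1) z hz
    have h2 := hψ0 n z (fun h => hz (Kx_mono Ω (by lia) h))
    simp only [h1, h2, sub_zero]
  have hgK : ∀ n, ∀ z ∈ Kx Ω (n + 1), g n z = 0 := by
    intro n z hz
    have h1 := hψ1 (n + 1) z (Kx_mono Ω (by lia) hz)
    have h2 := hψ1 n z hz
    simp [hg, h1, h2]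
  have hgK' : ∀ n, ∀ z ∉ Kx Ω (n + 3), g n z = 0 := by
    intro n z hz
    have h1 := hψ0 (n + 1) z hz
    have h2 := hψ0 n z (fun h => hz (Kx_mono Ω (by lia) h))
    simp [hg, h1, h2]
  have hp : ∀ n : ℕ, ∃ p : ℂ → ℂ, DifferentiableOn ℂ p Ω ∧
      ∀ z ∈ Kx Ω n, ‖cauchyT (g n) z - p z‖ ≤ (1 / 2 : ℝ) ^ n := by
    intro n
    have hdis : Disjoint (Kx Ω n) (Kx Ω (n + 3) \ interior (Kx Ω (n + 1))) := by
      rw [Set.disjoint_left]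
      intro z hz h
      exact h.2 (Kx_interior Ω n hz)
    refine approx_cauchyT Ω (Kx Ω n) (Kx Ω (n + 3) \ interior (Kx Ω (n + 1))) (Kx_compact _ _)
      ((Kx_compact _ _).diff isOpen_interior) hdis (Kx_subset _ _) (g n) (hgs n).1.continuous ?_ ?_ _
      (by positivity)
    · intro w hw
      by_cases h : w ∈ Kx Ω (n + 3)
      · apply hgK
        by_contra h'
        exact hw ⟨h, fun hi => h' (interior_subset hi)⟩
      · exact hgK' n w h
    · intro w hw ε hε
      exact approx_kernel Ω n w (fun h => Set.disjoint_left.mp hdis h hw) ε hε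
  choose p hpd hpb using hp
  set h : ℕ → ℂ → ℂ := fun n z => cauchyT (g n) z - p n z with hh
  have hhs : ∀ n, ContDiffOn ℝ (⊤ : ℕ∞) (h n) Ω := fun n =>
    (cauchyT_contDiff (g n) (hgs n).1 (hgs n).2).contDiffOn.sub (holo_smooth hΩ (hpd n))
  have hdiff : ∀ {a : ℂ → ℂ}, ContDiffOn ℝ (⊤ : ℕ∞) a Ω → ∀ z ∈ Ω, DifferentiableAt ℝ a z := by
    intro a ha z hz
    exact (ha.contDiffAt (hΩ.mem_nhds hz)).differentiableAt (by simp)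
  have hhd : ∀ n, ∀ z ∈ Ω, dbar (h n) z = g n z := by
    intro n z hz
    have h1 : DifferentiableAt ℝ (cauchyT (g n)) z :=
      hdiff (cauchyT_contDiff (g n) (hgs n).1 (hgs n).2).contDiffOn z hz
    have h2 : DifferentiableAt ℝ (p n) z := hdiff (holo_smooth hΩ (hpd n)) z hz
    have h3 : DifferentiableAt ℂ (p n) z := (hpd n).differentiableAt (hΩ.mem_nhds hz)
    rw [hh]
    simp only
    rw [dbar_sub h1 h2, dbar_holo h3, cauchyT_dbar (g n) (hgs n).1 (hgs n).2, sub_zero]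
  have hA : ∀ M : ℕ, ContDiffOn ℝ (⊤ : ℕ∞) (fun z => cauchyT g0 z + ∑ n ∈ Finset.range M, h n z) Ω ∧
      ∀ z ∈ Ω, dbar (fun z => cauchyT g0 z + ∑ n ∈ Finset.range M, h n z) z = ψ M z * f z := by
    intro M
    induction M with
    | zero =>
      simp only [Finset.range_zero, Finset.sum_empty, add_zero]
      exact ⟨(cauchyT_contDiff g0 hg0s hg0c).contDiffOn, fun z _ => cauchyT_dbar g0 hg0s hg0c z⟩
    | succ M ih =>
      simp only [Finset.sum_range_succ, ← add_assoc]
      refine ⟨ih.1.add (hhs M), fun z hz => ?_⟩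
      rw [dbar_add (hdiff ih.1 z hz) (hdiff (hhs M) z hz), ih.2 z hz, hhd M z hz]
      simp only [hg]
      push_cast
      ring
  have main : ∀ z₀ ∈ Ω, ContDiffAt ℝ (⊤ : ℕ∞) (fun z => cauchyT g0 z + ∑' n, h n z) z₀ ∧
      dbar (fun z => cauchyT g0 z + ∑' n, h n z) z₀ = f z₀ := by
    intro z₀ hz₀
    obtain ⟨N, hN⟩ := Kx_exhaust Ω hΩ z₀ hz₀
    set M := N + 1 with hM
    set U := interior (Kx Ω M) with hU
    have hUo : IsOpen U := isOpen_interior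
    have hzU : z₀ ∈ U := Kx_interior Ω N hN
    have hUΩ : U ⊆ Ω := interior_subset.trans (Kx_subset Ω M)
    have hsum : Summable (fun n : ℕ => (1 / 2 : ℝ) ^ (n + M)) :=
      (summable_nat_add_iff M).mpr summable_geometric_two
    have hbd : ∀ (n : ℕ), ∀ z ∈ U, ‖h (n + M) z‖ ≤ (1 / 2 : ℝ) ^ (n + M) := fun n z hz =>
      hpb (n + M) z (Kx_mono Ω (by lia) (interior_subset hz))
    have htail : DifferentiableOn ℂ (fun z => ∑' n, h (n + M) z) U := by
      refine differentiableOn_tsum_of_summable_norm hsum (fun n z hz => ?_) hUo hbd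
      apply DifferentiableAt.differentiableWithinAt
      apply holo_of_dbar (hdiff (hhs _) z (hUΩ hz))
      rw [hhd _ z (hUΩ hz)]
      exact hgK _ z (Kx_mono Ω (by lia) (interior_subset hz))
    have heq : (fun z => cauchyT g0 z + ∑' n, h n z) =ᶠ[𝓝 z₀]
        fun z => (cauchyT g0 z + ∑ n ∈ Finset.range M, h n z) + ∑' n, h (n + M) z := by
      filter_upwards [hUo.mem_nhds hzU] with z hz
      have hs : Summable (fun n => h n z) := by
        rw [← summable_nat_add_iff M]
        exact Summable.of_norm_bounded hsum (fun n => hbd n z hz)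
      rw [← hs.sum_add_tsum_nat_add M, add_assoc]
    have c1 := (hA M).1.contDiffAt (hΩ.mem_nhds hz₀)
    have c2 := (holo_smooth hUo htail).contDiffAt (hUo.mem_nhds hzU)
    refine ⟨(c1.add c2).congr_of_eventuallyEq heq, ?_⟩
    have e1 : dbar (fun z => cauchyT g0 z + ∑' n, h n z) z₀ =
        dbar (fun z => (cauchyT g0 z + ∑ n ∈ Finset.range M, h n z) + ∑' n, h (n + M) z) z₀ := by
      simp only [dbar, pd, heq.fderiv_eq]
    rw [e1, dbar_add (c1.differentiableAt (by simp)) (c2.differentiableAt (by simp)),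
      (hA M).2 z₀ hz₀, dbar_holo (htail.differentiableAt (hUo.mem_nhds hzU)),
      hψ1 M z₀ (Kx_mono Ω (by lia) hN)]
    simp
  exact ⟨_, fun z hz => (main z hz).1.contDiffWithinAt, fun z hz => (main z hz).2⟩
end

section
/- Let Ω₁ ⊂ Ω₂ ⊂ ℝ^d be open and nonempty with D := inf{‖x − y‖_∞ : x ∈ Ω₁, y ∈ ∂Ω₂} > 0, let ν₁, ν₂ : Ω₂ → (0, ∞) be continuous with ν₁ ≤ ν₂, and suppose that for every ε > 0 there exists a compact set K ⊂ closure(Ω₁) such that ν₁(x) ≤ ε ν₂(x) for all x ∈ Ω₁ \ K. Then for every f ∈ C^∞(Ω₂) with sup_{x ∈ Ω₂, |β| ≤ m} |∂^β f(x)| ν₂(x) < ∞ for all m, every m ∈ ℕ₀ and every ε > 0, there exists φ ∈ C_c^∞(Ω₂) such that sup_{x ∈ Ω₁, |β| ≤ m} |∂^β(φf − f)(x)| ν₁(x) ≤ ε · (C(m, D) + 1) · sup_{x ∈ Ω₂, |β| ≤ m} |∂^β f(x)| ν₂(x), where C(m, D) depends only on m and D (not on ε or f); moreover φf has compact support in Ω₂.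 -/
/-- Real partial derivative in the direction `v`. -/
noncomputable def pdirV {d : ℕ} (v : Fin d → ℝ) (φ : (Fin d → ℝ) → ℂ) : (Fin d → ℝ) → ℂ :=
  fun x => fderiv ℝ φ x v

/-- Iterated partial derivative `∂^β` for a multi-index `β : Fin d → ℕ`. -/
noncomputable def pdM {d : ℕ} (β : Fin d → ℕ) (φ : (Fin d → ℝ) → ℂ) : (Fin d → ℝ) → ℂ :=
  ((List.finRange d).map (fun i => (pdirV (Pi.single i 1))^[β i])).foldr (· ∘ ·) id φ

open Set Filter Topology MeasureTheory

/-- Iterated partial derivatives along a list of coordinate indices. -/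
noncomputable def pdL {d : ℕ} (L : List (Fin d)) (f : (Fin d → ℝ) → ℂ) : (Fin d → ℝ) → ℂ :=
  L.foldr (fun i g => pdirV (Pi.single i 1) g) f

lemma pdL_cons {d : ℕ} (i : Fin d) (L : List (Fin d)) (f : (Fin d → ℝ) → ℂ) :
    pdL (i :: L) f = pdirV (Pi.single i 1) (pdL L f) := rfl

lemma pdL_append {d : ℕ} (A L : List (Fin d)) (f : (Fin d → ℝ) → ℂ) :
    pdL (A ++ L) f = pdL A (pdL L f) := by
  simp [pdL, List.foldr_append]

lemma pdL_replicate {d : ℕ} (i : Fin d) (n : ℕ) (f : (Fin d → ℝ) → ℂ) :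
    pdL (List.replicate n i) f = (pdirV (Pi.single i 1))^[n] f := by
  induction n with
  | zero => rfl
  | succ n ih => rw [List.replicate_succ, pdL_cons, ih, Function.iterate_succ_apply']

/-- The sorted list of indices attached to a multi-index. -/
def mlist {d : ℕ} (I : List (Fin d)) (β : Fin d → ℕ) : List (Fin d) :=
  I.flatMap (fun i => List.replicate (β i) i)

lemma pdM_aux {d : ℕ} (I : List (Fin d)) (β : Fin d → ℕ) (f : (Fin d → ℝ) → ℂ) :
    (I.map (fun i => (pdirV (Pi.single i 1))^[β i])).foldr (· ∘ ·) id f = pdL (mlist I β) f := by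
  induction I with
  | nil => rfl
  | cons i I ih =>
    have : mlist (i :: I) β = List.replicate (β i) i ++ mlist I β := by simp [mlist]
    rw [this, pdL_append, pdL_replicate, ← ih]
    rfl

lemma pdM_eq {d : ℕ} (β : Fin d → ℕ) (f : (Fin d → ℝ) → ℂ) :
    pdM β f = pdL (mlist (List.finRange d) β) f := pdM_aux _ _ _

lemma mlist_length {d : ℕ} (β : Fin d → ℕ) :
    (mlist (List.finRange d) β).length = ∑ i, β i := by
  rw [mlist, List.length_flatMap, Fin.sum_univ_def]
  simp

lemma mlist_sublist {d : ℕ} (I : List (Fin d)) (hI : I.Nodup) (β : Fin d → ℕ)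
    (A : List (Fin d)) (hA : A.Sublist (mlist I β)) : ∃ γ : Fin d → ℕ, A = mlist I γ := by
  induction I generalizing A with
  | nil => exact ⟨0, by simpa [mlist] using hA⟩
  | cons i I ih =>
    have h : ∀ γ : Fin d → ℕ, mlist (i :: I) γ = List.replicate (γ i) i ++ mlist I γ := by
      intro γ; simp [mlist]
    rw [h, List.sublist_append_iff] at hA
    obtain ⟨l₁, l₂, rfl, h₁, h₂⟩ := hA
    obtain ⟨k, hk, rfl⟩ := List.sublist_replicate_iff.1 h₁
    rw [List.nodup_cons] at hI
    obtain ⟨γ, rfl⟩ := ih hI.2 l₂ h₂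
    refine ⟨Function.update γ i k, ?_⟩
    rw [h, Function.update_self]
    congr 1
    unfold mlist
    apply List.flatMap_congr
    intro j hj
    rw [Function.update_of_ne]
    rintro rfl
    exact hI.1 hj

lemma pdirV_smooth {d : ℕ} {U : Set (Fin d → ℝ)} (hU : IsOpen U) (v : Fin d → ℝ)
    {f : (Fin d → ℝ) → ℂ} (hf : ContDiffOn ℝ (⊤ : ℕ∞) f U) :
    ContDiffOn ℝ (⊤ : ℕ∞) (pdirV v f) U :=
  (hf.fderiv_of_isOpen hU (m := ((⊤ : ℕ∞) : WithTop ℕ∞)) (by simp)).clm_apply contDiffOn_const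

lemma pdL_smooth {d : ℕ} {U : Set (Fin d → ℝ)} (hU : IsOpen U) (L : List (Fin d))
    {f : (Fin d → ℝ) → ℂ} (hf : ContDiffOn ℝ (⊤ : ℕ∞) f U) :
    ContDiffOn ℝ (⊤ : ℕ∞) (pdL L f) U := by
  induction L with
  | nil => exact hf
  | cons i L ih => exact pdirV_smooth hU _ ih

lemma pdirV_congr {d : ℕ} {U : Set (Fin d → ℝ)} (hU : IsOpen U) (v : Fin d → ℝ)
    {f g : (Fin d → ℝ) → ℂ} (h : EqOn f g U) : EqOn (pdirV v f) (pdirV v g) U := by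
  intro x hx
  have : f =ᶠ[𝓝 x] g := h.eventuallyEq_of_mem (hU.mem_nhds hx)
  simp only [pdirV, this.fderiv_eq]

lemma pdL_congr {d : ℕ} {U : Set (Fin d → ℝ)} (hU : IsOpen U) (L : List (Fin d))
    {f g : (Fin d → ℝ) → ℂ} (h : EqOn f g U) : EqOn (pdL L f) (pdL L g) U := by
  induction L with
  | nil => exact h
  | cons i L ih => exact pdirV_congr hU _ ih

lemma smooth_diffAt {d : ℕ} {U : Set (Fin d → ℝ)} (hU : IsOpen U)
    {f : (Fin d → ℝ) → ℂ} (hf : ContDiffOn ℝ (⊤ : ℕ∞) f U) {x : Fin d → ℝ} (hx : x ∈ U) :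
    DifferentiableAt ℝ f x :=
  (hf.contDiffAt (hU.mem_nhds hx)).differentiableAt (by simp)

lemma pdL_add {d : ℕ} {U : Set (Fin d → ℝ)} (hU : IsOpen U) (L : List (Fin d))
    {f g : (Fin d → ℝ) → ℂ} (hf : ContDiffOn ℝ (⊤ : ℕ∞) f U)
    (hg : ContDiffOn ℝ (⊤ : ℕ∞) g U) :
    EqOn (pdL L (fun x => f x + g x)) (fun x => pdL L f x + pdL L g x) U := by
  induction L with
  | nil => intro x _; rfl
  | cons i L ih =>
    intro x hx
    rw [pdL_cons, pdirV_congr hU _ ih hx]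
    have h1 := smooth_diffAt hU (pdL_smooth hU L hf) hx
    have h2 := smooth_diffAt hU (pdL_smooth hU L hg) hx
    simp only [pdirV, pdL_cons]
    rw [fderiv_fun_add h1 h2]
    rfl

lemma pdL_mul_bound {d : ℕ} {U : Set (Fin d → ℝ)} (hU : IsOpen U) {x : Fin d → ℝ} (hx : x ∈ U)
    {M N : ℝ} (L : List (Fin d)) :
    ∀ (f g : (Fin d → ℝ) → ℂ), ContDiffOn ℝ (⊤ : ℕ∞) f U → ContDiffOn ℝ (⊤ : ℕ∞) g U →
    (∀ A : List (Fin d), A.length ≤ L.length → ‖pdL A g x‖ ≤ M) →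
    (∀ A : List (Fin d), A.Sublist L → ‖pdL A f x‖ ≤ N) →
    ‖pdL L (fun y => g y * f y) x‖ ≤ 2 ^ L.length * (M * N) := by
  induction L using List.reverseRecOn with
  | nil =>
    intro f g _ _ hM hN
    have h1 := hM [] le_rfl
    have h2 := hN [] (List.Sublist.refl _)
    simp only [pdL, List.foldr_nil, norm_mul, List.length_nil, pow_zero, one_mul] at *
    exact mul_le_mul h1 h2 (norm_nonneg _) ((norm_nonneg _).trans h1)
  | append_singleton L i ih =>
    intro f g hf hg hM hN
    have key : EqOn (pdirV (Pi.single i 1) (fun y => g y * f y))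
        (fun y => pdirV (Pi.single i 1) g y * f y + g y * pdirV (Pi.single i 1) f y) U := by
      intro y hy
      simp only [pdirV]
      rw [fderiv_fun_mul (smooth_diffAt hU hg hy) (smooth_diffAt hU hf hy)]
      simp
      ring
    have e1 : ∀ h : (Fin d → ℝ) → ℂ, pdirV (Pi.single i 1) h = pdL [i] h := fun _ => rfl
    rw [pdL_append, ← e1, pdL_congr hU L key hx,
      pdL_add hU L ((pdirV_smooth hU _ hg).mul hf) (hg.mul (pdirV_smooth hU _ hf)) hx]
    have b1 := ih f (pdirV (Pi.single i 1) g) hf (pdirV_smooth hU _ hg)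
      (fun A hA => by rw [e1, ← pdL_append]; exact hM _ (by simpa using hA))
      (fun A hA => hN A (hA.trans (List.sublist_append_left _ _)))
    have b2 := ih (pdirV (Pi.single i 1) f) g (pdirV_smooth hU _ hf) hg
      (fun A hA => hM _ (by simp; omega))
      (fun A hA => by rw [e1, ← pdL_append]; exact hN _ (hA.append_right _))
    refine (norm_add_le _ _).trans ?_
    rw [List.length_append, List.length_singleton, pow_succ]
    linarith

/-- Convolution of a (nice) kernel with the indicator of `S`. -/
noncomputable def cv {d : ℕ} (S : Set (Fin d → ℝ)) (ρ : (Fin d → ℝ) → ℂ) : (Fin d → ℝ) → ℂ :=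
  MeasureTheory.convolution (S.indicator (fun _ => (1 : ℂ))) ρ (ContinuousLinearMap.mul ℝ ℂ) volume

lemma ind_li {d : ℕ} {S : Set (Fin d → ℝ)} (hS : MeasurableSet S) :
    LocallyIntegrable (S.indicator (fun _ => (1 : ℂ))) volume :=
  (locallyIntegrable_const (1 : ℂ)).indicator hS

lemma pdirV_hcs {d : ℕ} (v : Fin d → ℝ) {ρ : (Fin d → ℝ) → ℂ} (h : HasCompactSupport ρ) :
    HasCompactSupport (pdirV v ρ) := h.fderiv_apply ℝ v

lemma pdL_hcs {d : ℕ} (L : List (Fin d)) {ρ : (Fin d → ℝ) → ℂ} (h : HasCompactSupport ρ) :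
    HasCompactSupport (pdL L ρ) := by
  induction L with
  | nil => exact h
  | cons i L ih => exact pdirV_hcs _ ih

lemma pdirV_cv {d : ℕ} {S : Set (Fin d → ℝ)} (hS : MeasurableSet S) (v : Fin d → ℝ)
    {ρ : (Fin d → ℝ) → ℂ} (h : HasCompactSupport ρ) (hs : ContDiff ℝ (⊤ : ℕ∞) ρ) :
    pdirV v (cv S ρ) = cv S (pdirV v ρ) := by
  ext x
  have h1 : ContDiff ℝ 1 ρ := hs.of_le (by exact_mod_cast le_top)
  have := (h.hasFDerivAt_convolution_right (ContinuousLinearMap.mul ℝ ℂ) (ind_li hS) h1 x).fderiv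
  simp only [pdirV, cv]
  rw [this, convolution_precompR_apply _ (ind_li hS) (h.fderiv ℝ) (h1.continuous_fderiv (by simp))]
  rfl

lemma pdL_cv {d : ℕ} {S : Set (Fin d → ℝ)} (hS : MeasurableSet S) (L : List (Fin d))
    {ρ : (Fin d → ℝ) → ℂ} (h : HasCompactSupport ρ) (hs : ContDiff ℝ (⊤ : ℕ∞) ρ) :
    pdL L (cv S ρ) = cv S (pdL L ρ) := by
  induction L with
  | nil => rfl
  | cons i L ih =>
    rw [pdL_cons, ih, pdirV_cv hS _ (pdL_hcs L h)]
    · rfl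
    · exact contDiffOn_univ.1 (pdL_smooth isOpen_univ L hs.contDiffOn)

lemma cv_apply {d : ℕ} (S : Set (Fin d → ℝ)) (ρ : (Fin d → ℝ) → ℂ) (x : Fin d → ℝ) :
    cv S ρ x = ∫ t, S.indicator (fun _ => (1 : ℂ)) t * ρ (x - t) := rfl

lemma cv_bound {d : ℕ} (S : Set (Fin d → ℝ))
    {ρ : (Fin d → ℝ) → ℂ} (h : HasCompactSupport ρ) (hs : Continuous ρ) (x : Fin d → ℝ) :
    ‖cv S ρ x‖ ≤ ∫ t, ‖ρ t‖ := by
  have hi : Integrable (fun t => ‖ρ t‖) := (hs.integrable_of_hasCompactSupport h).norm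
  rw [← integral_sub_left_eq_self (fun t => ‖ρ t‖) volume x, cv_apply]
  refine norm_integral_le_of_norm_le (hi.comp_sub_left x) (ae_of_all _ fun t => ?_)
  by_cases ht : t ∈ S <;> simp [ht]

lemma exists_kernel (d : ℕ) {r : ℝ} (hr : 0 < r) : ∃ ρ : (Fin d → ℝ) → ℂ,
    ContDiff ℝ (⊤ : ℕ∞) ρ ∧ HasCompactSupport ρ ∧ (∫ t, ρ t = 1) ∧ ∀ t, r ≤ ‖t‖ → ρ t = 0 := by
  let b : ContDiffBump (0 : Fin d → ℝ) := ⟨r / 2, r, by positivity, by linarith⟩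
  refine ⟨fun t => ((b.normed volume t : ℝ) : ℂ), ?_, ?_, ?_, ?_⟩
  · exact Complex.ofRealCLM.contDiff.comp b.contDiff_normed
  · exact (b.hasCompactSupport_normed (μ := volume)).comp_left (g := Complex.ofReal) (by simp)
  · rw [integral_complex_ofReal, b.integral_normed]; simp
  · intro t ht
    have : t ∉ Function.support (b.normed volume) := by
      rw [b.support_normed_eq]
      simpa [b] using ht
    simpa using this

lemma ball_subset_omega {d : ℕ} {D : ℝ} {Ω₁ Ω₂ : Set (Fin d → ℝ)} (h12 : Ω₁ ⊆ Ω₂)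
    (hD : 0 < D) (h : ∀ x ∈ Ω₁, ∀ y ∈ frontier Ω₂, D ≤ ‖x - y‖) {x : Fin d → ℝ}
    (hx : x ∈ closure Ω₁) : Metric.ball x D ⊆ Ω₂ := by
  intro y hy
  by_contra hyn
  have hc : IsPreconnected (Metric.ball x D) := (convex_ball x D).isPreconnected
  obtain ⟨z, hz, hz1⟩ := Metric.mem_closure_iff.1 hx D hD
  have hne : (Metric.ball x D ∩ frontier Ω₂).Nonempty := by
    by_contra hemp
    rw [not_nonempty_iff_eq_empty, ← disjoint_iff_inter_eq_empty] at hemp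
    have hsub : Metric.ball x D ⊆ interior Ω₂ ∪ (closure Ω₂)ᶜ := by
      intro w hw
      by_contra hw2
      simp only [mem_union, mem_compl_iff, not_or, not_not] at hw2
      exact disjoint_left.1 hemp hw ⟨hw2.2, hw2.1⟩
    have hzb : z ∈ Metric.ball x D := by rwa [Metric.mem_ball, dist_comm]
    have := hc.subset_left_of_subset_union isOpen_interior isClosed_closure.isOpen_compl
      (disjoint_compl_right.mono_left (interior_subset.trans subset_closure)) hsub
      ⟨z, hzb, (hsub hzb).resolve_right fun hh => hh (subset_closure (h12 hz))⟩
    exact hyn (interior_subset (this hy))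
  obtain ⟨w, hw, hwf⟩ := hne
  have hcl : x ∈ {x | D ≤ ‖x - w‖} :=
    closure_minimal (fun a ha => h a ha w hwf) (isClosed_le continuous_const (continuous_id.sub continuous_const).norm) hx
  rw [Metric.mem_ball, dist_comm, dist_eq_norm] at hw
  exact absurd hcl (not_le.2 hw)

lemma exists_cutoff_s15 (d m : ℕ) {D : ℝ} (hD : 0 < D) : ∃ M : ℝ, 0 < M ∧
    ∀ K : Set (Fin d → ℝ), IsCompact K → ∃ φ : (Fin d → ℝ) → ℂ,
      ContDiff ℝ (⊤ : ℕ∞) φ ∧ HasCompactSupport φ ∧ tsupport φ ⊆ Metric.cthickening (D / 2) K ∧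
      (∃ V : Set (Fin d → ℝ), IsOpen V ∧ K ⊆ V ∧ ∀ x ∈ V, φ x = 1) ∧
      ∀ x, ∀ A : List (Fin d), A.length ≤ m → ‖pdL A φ x‖ ≤ M := by
  obtain ⟨ρ, hρ, hρc, hρi, hρ0⟩ := exists_kernel d (r := D / 8) (by positivity)
  have hfin : Set.Finite {A : List (Fin d) | A.length ≤ m} := List.finite_length_le _ _
  obtain ⟨M, hM⟩ := (hfin.image fun A => ∫ t, ‖pdL A ρ t‖).bddAbove
  refine ⟨max M 1, by positivity, fun K hK => ?_⟩
  set S := Metric.thickening (D / 4) K with hSdef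
  have hS : MeasurableSet S := Metric.isOpen_thickening.measurableSet
  have hsup : Function.support (cv S ρ) ⊆ Metric.cthickening (D / 2) K := by
    intro x hx
    by_contra hxn
    apply hx
    rw [cv_apply]
    refine integral_eq_zero_of_ae (ae_of_all _ fun t => ?_)
    by_cases ht : t ∈ S
    · obtain ⟨z, hz, hzt⟩ := Metric.mem_thickening_iff.1 ht
      have : D / 8 ≤ ‖x - t‖ := by
        by_contra hlt
        rw [not_le, ← dist_eq_norm] at hlt
        apply hxn
        apply Metric.thickening_subset_cthickening
        refine Metric.mem_thickening_iff.2 ⟨z, hz, ?_⟩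
        linarith [dist_triangle x t z]
      simp [hρ0 _ this]
    · simp [ht]
  have htsup : tsupport (cv S ρ) ⊆ Metric.cthickening (D / 2) K :=
    closure_minimal hsup Metric.isClosed_cthickening
  refine ⟨cv S ρ, ?_, ?_, htsup, ⟨Metric.thickening (D / 8) K, Metric.isOpen_thickening,
    Metric.self_subset_thickening (by positivity) K, ?_⟩, ?_⟩
  · exact hρc.contDiff_convolution_right _ (ind_li hS) hρ
  · exact hK.cthickening.of_isClosed_subset (isClosed_tsupport _) htsup
  · intro x hx
    obtain ⟨z, hz, hzt⟩ := Metric.mem_thickening_iff.1 hx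
    refine Eq.trans ?_ ((integral_sub_left_eq_self ρ volume x).trans hρi)
    rw [cv_apply]
    congr 1
    ext t
    by_cases ht : t ∈ S
    · simp [ht]
    · have : D / 8 ≤ ‖x - t‖ := by
        by_contra hlt
        rw [not_le, ← dist_eq_norm, dist_comm] at hlt
        apply ht
        refine Metric.mem_thickening_iff.2 ⟨z, hz, ?_⟩
        linarith [dist_triangle t x z]
      simp [hρ0 _ this]
  · intro x A hA
    rw [pdL_cv hS A hρc hρ]
    have hs : ContDiff ℝ (⊤ : ℕ∞) (pdL A ρ) :=
      contDiffOn_univ.1 (pdL_smooth isOpen_univ A hρ.contDiffOn)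
    refine (cv_bound S (pdL_hcs A hρc) hs.continuous x).trans (le_max_of_le_left ?_)
    exact hM ⟨A, hA, rfl⟩

/-- density of compactly supported functions, with a multiplicative constant
`C(m, D)` depending only on the order `m` and the sup-norm distance `D` between `Ω₁` and
`∂Ω₂`. (The norm on `Fin d → ℝ` is the sup-norm `‖·‖_∞`.) -/
theorem stmt15 (d : ℕ) :
    ∃ C : ℕ → ℝ → ℝ, (∀ m D, 0 < C m D) ∧
      ∀ (m : ℕ) (D : ℝ) (Ω₁ Ω₂ : Set (Fin d → ℝ)),
        IsOpen Ω₁ → IsOpen Ω₂ → Ω₁.Nonempty → Ω₁ ⊆ Ω₂ →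
        0 < D → (∀ x ∈ Ω₁, ∀ y ∈ frontier Ω₂, D ≤ ‖x - y‖) →
        ∀ ν₁ ν₂ : (Fin d → ℝ) → ℝ,
          ContinuousOn ν₁ Ω₂ → ContinuousOn ν₂ Ω₂ →
          (∀ x ∈ Ω₂, 0 < ν₁ x) → (∀ x ∈ Ω₂, 0 < ν₂ x) → (∀ x ∈ Ω₂, ν₁ x ≤ ν₂ x) →
          (∀ ε : ℝ, 0 < ε → ∃ K : Set (Fin d → ℝ), IsCompact K ∧ K ⊆ closure Ω₁ ∧
            ∀ x ∈ Ω₁ \ K, ν₁ x ≤ ε * ν₂ x) →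
          ∀ f : (Fin d → ℝ) → ℂ, ContDiffOn ℝ (⊤ : ℕ∞) f Ω₂ →
            (∀ m' : ℕ, ∃ B : ℝ, ∀ x ∈ Ω₂, ∀ β : Fin d → ℕ, (∑ i, β i) ≤ m' →
              ‖pdM β f x‖ * ν₂ x ≤ B) →
            ∀ ε : ℝ, 0 < ε → ∃ φ : (Fin d → ℝ) → ℂ,
              ContDiff ℝ (⊤ : ℕ∞) φ ∧ HasCompactSupport φ ∧ tsupport φ ⊆ Ω₂ ∧
              HasCompactSupport (fun x => φ x * f x) ∧
              ∀ B : ℝ, (∀ x ∈ Ω₂, ∀ β : Fin d → ℕ, (∑ i, β i) ≤ m →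
                  ‖pdM β f x‖ * ν₂ x ≤ B) →
                ∀ x ∈ Ω₁, ∀ β : Fin d → ℕ, (∑ i, β i) ≤ m →
                  ‖pdM β (fun y => φ y * f y) x - pdM β f x‖ * ν₁ x ≤
                    ε * (C m D + 1) * B := by
  have hex : ∀ (m : ℕ) (D : ℝ), ∃ M : ℝ, 0 < M ∧ (0 < D →
    ∀ K : Set (Fin d → ℝ), IsCompact K → ∃ φ : (Fin d → ℝ) → ℂ,
      ContDiff ℝ (⊤ : ℕ∞) φ ∧ HasCompactSupport φ ∧ tsupport φ ⊆ Metric.cthickening (D / 2) K ∧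
      (∃ V : Set (Fin d → ℝ), IsOpen V ∧ K ⊆ V ∧ ∀ x ∈ V, φ x = 1) ∧
      ∀ x, ∀ A : List (Fin d), A.length ≤ m → ‖pdL A φ x‖ ≤ M) := by
    intro m D
    by_cases hD : 0 < D
    · obtain ⟨M, h1, h2⟩ := exists_cutoff_s15 d m hD
      exact ⟨M, h1, fun _ => h2⟩
    · exact ⟨1, one_pos, fun h => absurd h hD⟩
  choose M hM0 hM using hex
  refine ⟨fun m D => 2 ^ m * M m D, fun m D => mul_pos (by positivity) (hM0 m D), ?_⟩
  intro m D Ω₁ Ω₂ hO1 hO2 hne h12 hD hdist ν₁ ν₂ _ _ hν1 hν2 _ hsmall f hf _ ε hε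
  obtain ⟨K, hK, hKc, hKs⟩ := hsmall ε hε
  obtain ⟨φ, hφ, hφc, hφs, ⟨V, hV, hKV, hV1⟩, hφM⟩ := hM m D hD K hK
  refine ⟨φ, hφ, hφc, ?_, hφc.mul_right, ?_⟩
  · intro x hx
    have hx2 := Metric.cthickening_subset_thickening' (δ₁ := D / 2) (δ₂ := D) hD (by linarith) K (hφs hx)
    obtain ⟨z, hz, hzx⟩ := Metric.mem_thickening_iff.1 hx2
    exact ball_subset_omega h12 hD hdist (hKc hz) hzx
  intro B hB x hx β hβ
  have hx2 := h12 hx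
  have hB0 : 0 ≤ B := (mul_nonneg (norm_nonneg _) (hν2 x hx2).le).trans
    (hB x hx2 0 (by simp))
  have hR : 0 ≤ ε * (2 ^ m * M m D + 1) * B := by
    have := hM0 m D
    positivity
  rw [pdM_eq, pdM_eq]
  by_cases hxK : x ∈ K
  · have : EqOn (fun y => φ y * f y) f V := fun y hy => by simp [hV1 y hy]
    rw [pdL_congr hV _ this (hKV hxK)]
    simpa using hR
  · have hN : ∀ A : List (Fin d), A.Sublist (mlist (List.finRange d) β) →
        ‖pdL A f x‖ ≤ B / ν₂ x := by
      intro A hA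
      obtain ⟨γ, rfl⟩ := mlist_sublist _ (List.nodup_finRange d) β A hA
      rw [le_div_iff₀ (hν2 x hx2), ← pdM_eq]
      apply hB x hx2
      have := hA.length_le
      rw [mlist_length, mlist_length] at this
      exact this.trans hβ
    have hlen : (mlist (List.finRange d) β).length ≤ m := by rwa [mlist_length]
    have h1 := pdL_mul_bound hO2 hx2 (mlist (List.finRange d) β) f φ hf hφ.contDiffOn
      (fun A hA => hφM x A (hA.trans hlen)) hN
    have h2 := hN _ (List.Sublist.refl _)
    have hB' : 0 ≤ B / ν₂ x := div_nonneg hB0 (hν2 x hx2).le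
    have h3 : (2 : ℝ) ^ (mlist (List.finRange d) β).length * (M m D * (B / ν₂ x))
        ≤ 2 ^ m * (M m D * (B / ν₂ x)) :=
      mul_le_mul_of_nonneg_right (pow_le_pow_right₀ (by norm_num) hlen)
        (mul_nonneg (hM0 m D).le hB')
    have h4 : ‖pdL (mlist (List.finRange d) β) (fun y => φ y * f y) x -
        pdL (mlist (List.finRange d) β) f x‖ ≤ (2 ^ m * M m D + 1) * (B / ν₂ x) := by
      refine (norm_sub_le _ _).trans ?_
      linarith
    have h5 : 0 ≤ (2 ^ m * M m D + 1) * (B / ν₂ x) := (norm_nonneg _).trans h4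
    calc _ ≤ ((2 ^ m * M m D + 1) * (B / ν₂ x)) * (ε * ν₂ x) :=
          mul_le_mul h4 (hKs x ⟨hx, hxK⟩) (hν1 x hx2).le h5
      _ = ε * (2 ^ m * M m D + 1) * B := by
          have := (hν2 x hx2).ne'
          field_simp
end

section
/- Let 0 < r₀ < r₁ < r₂, q ∈ ℕ, and let Q_r = [−r, r]² ⊂ ℝ². For every m ∈ ℕ₀ there exist l ∈ ℕ₀ and C > 0 such that for all f ∈ C^∞(int Q_{r₂}, ℂ) and all multi-indices α with |α| ≤ m: sup_{x ∈ Q_{r₀}} |∂^α f(x)| ≤ C ( ‖f‖_{L^q(Q_{r₁})} + sup_{|β| ≤ l} ‖∂^β Δf‖_{L^q(Q_{r₁})} ), where Δ is the Laplacian. -/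
open Complex

/-- Iterated real partial derivative `∂₁^a ∂₂^b f`. -/
noncomputable def pdi (a b : ℕ) (f : ℂ → ℂ) : ℂ → ℂ := (pd 1)^[a] ((pd I)^[b] f)

/-- The Laplacian `Δ f = ∂₁² f + ∂₂² f`. -/
noncomputable def lap (f : ℂ → ℂ) : ℂ → ℂ := fun z => pdi 2 0 f z + pdi 0 2 f z

/-- The closed square `Q_r = [-r, r]² ⊆ ℝ² ≅ ℂ`. -/
def Qc (r : ℝ) : Set ℂ := {z : ℂ | |z.re| ≤ r ∧ |z.im| ≤ r}

/-- The open square `int Q_r = (-r, r)²`. -/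
def Qo (r : ℝ) : Set ℂ := {z : ℂ | |z.re| < r ∧ |z.im| < r}

open MeasureTheory

abbrev Sm (f : ℂ → ℂ) : Prop := ContDiff ℝ (⊤ : ℕ∞) f

lemma Sm.pd {f : ℂ → ℂ} (hf : Sm f) (v : ℂ) : Sm (pd v f) := by
  unfold _root_.pd
  have h : ContDiff ℝ (⊤ : ℕ∞) (fderiv ℝ f) := hf.fderiv_right (by simp)
  exact h.clm_apply contDiff_const

lemma Sm.pd_iter {f : ℂ → ℂ} (hf : Sm f) (v : ℂ) (n : ℕ) : Sm ((_root_.pd v)^[n] f) := by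
  induction n with
  | zero => exact hf
  | succ n ih => rw [Function.iterate_succ_apply']; exact ih.pd v

lemma Sm.pdi {f : ℂ → ℂ} (hf : Sm f) (a b : ℕ) : Sm (pdi a b f) :=
  (hf.pd_iter I b).pd_iter 1 a

lemma Sm.diff {f : ℂ → ℂ} (hf : Sm f) : Differentiable ℝ f := hf.differentiable (by simp)

lemma Sm.cont {f : ℂ → ℂ} (hf : Sm f) : Continuous f := hf.continuous

lemma Sm.add' {f g : ℂ → ℂ} (hf : Sm f) (hg : Sm g) : Sm (fun z => f z + g z) :=
  ContDiff.add hf hg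

lemma Sm.lap {f : ℂ → ℂ} (hf : Sm f) : Sm (lap f) := (hf.pdi 2 0).add' (hf.pdi 0 2)

lemma pd_comm {f : ℂ → ℂ} (hf : Sm f) (v w : ℂ) : pd v (pd w f) = pd w (pd v f) := by
  funext z
  have hd : DifferentiableAt ℝ (fderiv ℝ f) z :=
    ((hf.fderiv_right (m := (⊤ : ℕ∞)) (by simp)).differentiable (by simp)) z
  have key : ∀ v w : ℂ, pd v (pd w f) z = fderiv ℝ (fderiv ℝ f) z v w := by
    intro v w
    unfold pd
    rw [fderiv_clm_apply hd (by fun_prop)]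
    simp
  rw [key, key]
  have : IsSymmSndFDerivAt ℝ f z :=
    (hf.contDiffAt (x := z)).isSymmSndFDerivAt (by simp only [minSmoothness_of_isRCLikeNormedField]; exact WithTop.coe_le_coe.2 (le_top : (2:ℕ∞) ≤ ⊤))
  exact this v w

lemma pd_iter_comm {f : ℂ → ℂ} (hf : Sm f) (v w : ℂ) (n : ℕ) :
    pd v ((pd w)^[n] f) = (pd w)^[n] (pd v f) := by
  induction n with
  | zero => rfl
  | succ n ih =>
    rw [Function.iterate_succ_apply', Function.iterate_succ_apply', ← ih,
      pd_comm (hf.pd_iter w n)]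

lemma pd_pdi {f : ℂ → ℂ} (hf : Sm f) (v : ℂ) (a b : ℕ) :
    pd v (pdi a b f) = pdi a b (pd v f) := by
  unfold pdi
  rw [pd_iter_comm (hf.pd_iter I b), pd_iter_comm hf]

lemma pd_one_pdi (f : ℂ → ℂ) (a b : ℕ) : pd 1 (pdi a b f) = pdi (a+1) b f := by
  unfold pdi
  rw [Function.iterate_succ_apply']

lemma pd_I_pdi {f : ℂ → ℂ} (hf : Sm f) (a b : ℕ) : pd I (pdi a b f) = pdi a (b+1) f := by
  rw [pd_pdi hf]
  unfold pdi
  rw [Function.iterate_succ_apply]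

lemma pd_add {f g : ℂ → ℂ} (hf : Sm f) (hg : Sm g) (v : ℂ) :
    pd v (fun z => f z + g z) = fun z => pd v f z + pd v g z := by
  funext z
  unfold pd
  rw [fderiv_fun_add (hf.diff z) (hg.diff z)]
  rfl

lemma pd_iter_add {f g : ℂ → ℂ} (hf : Sm f) (hg : Sm g) (v : ℂ) (n : ℕ) :
    (pd v)^[n] (fun z => f z + g z) = fun z => (pd v)^[n] f z + (pd v)^[n] g z := by
  induction n with
  | zero => rfl
  | succ n ih =>
    simp only [Function.iterate_succ_apply']
    rw [ih, pd_add (hf.pd_iter v n) (hg.pd_iter v n)]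

lemma pdi_add {f g : ℂ → ℂ} (hf : Sm f) (hg : Sm g) (a b : ℕ) :
    pdi a b (fun z => f z + g z) = fun z => pdi a b f z + pdi a b g z := by
  unfold pdi
  rw [pd_iter_add hf hg, pd_iter_add (hf.pd_iter I b) (hg.pd_iter I b)]

lemma lap_eq (f : ℂ → ℂ) : lap f = fun z => pd 1 (pd 1 f) z + pd I (pd I f) z := rfl

lemma lap_pdi {f : ℂ → ℂ} (hf : Sm f) (a b : ℕ) : lap (pdi a b f) = pdi a b (lap f) := by
  rw [lap_eq, lap_eq, pdi_add ((hf.pd _).pd _) ((hf.pd _).pd _)]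
  rw [pd_pdi hf, pd_pdi (hf.pd 1), pd_pdi hf, pd_pdi (hf.pd I)]

/-- locality -/
lemma pd_congr {U : Set ℂ} (hU : IsOpen U) {f g : ℂ → ℂ} (h : Set.EqOn f g U) (v : ℂ) :
    Set.EqOn (pd v f) (pd v g) U := by
  intro z hz
  have : f =ᶠ[nhds z] g := by
    filter_upwards [hU.mem_nhds hz] with y hy using h hy
  unfold pd
  rw [this.fderiv_eq]

lemma pd_iter_congr {U : Set ℂ} (hU : IsOpen U) {f g : ℂ → ℂ} (h : Set.EqOn f g U) (v : ℂ)
    (n : ℕ) : Set.EqOn ((pd v)^[n] f) ((pd v)^[n] g) U := by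
  induction n with
  | zero => exact h
  | succ n ih =>
    simp only [Function.iterate_succ_apply']
    exact pd_congr hU ih v

lemma pdi_congr {U : Set ℂ} (hU : IsOpen U) {f g : ℂ → ℂ} (h : Set.EqOn f g U) (a b : ℕ) :
    Set.EqOn (pdi a b f) (pdi a b g) U :=
  pd_iter_congr hU (pd_iter_congr hU h I b) 1 a

lemma lap_congr {U : Set ℂ} (hU : IsOpen U) {f g : ℂ → ℂ} (h : Set.EqOn f g U) :
    Set.EqOn (lap f) (lap g) U := by
  intro z hz
  simp only [lap]
  rw [pdi_congr hU h 2 0 hz, pdi_congr hU h 0 2 hz]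

/-- integration by parts -/
lemma ibp {φ G : ℂ → ℂ} (hφ : Sm φ) (hc : HasCompactSupport φ) (hG : Sm G) (v : ℂ) :
    ∫ y, φ y * pd v G y = - ∫ y, pd v φ y * G y := by
  have hc' : HasCompactSupport (pd v φ) := hc.fderiv_apply ℝ v
  apply integral_mul_fderiv_eq_neg_fderiv_mul_of_integrable
  · exact ((hφ.pd v).cont.mul hG.cont).integrable_of_hasCompactSupport hc'.mul_right
  · exact (hφ.cont.mul (hG.pd v).cont).integrable_of_hasCompactSupport hc.mul_right
  · exact (hφ.cont.mul hG.cont).integrable_of_hasCompactSupport hc.mul_right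
  · exact fun x _ => hφ.diff x
  · exact fun x _ => hG.diff x

lemma Sm.comp_aff {g : ℂ → ℂ} (hg : Sm g) (x : ℂ) (t : ℝ) : Sm (fun y => g (x + t * y)) := by
  apply ContDiff.comp hg
  fun_prop

lemma pd_comp_aff {g : ℂ → ℂ} (hg : Sm g) (x : ℂ) (t : ℝ) (v y : ℂ) :
    pd v (fun y => g (x + t * y)) y = t * pd v g (x + t * y) := by
  have h1 : HasFDerivAt (fun y : ℂ => x + t * y) ((t : ℂ) • ContinuousLinearMap.id ℝ ℂ) y := by
    apply HasFDerivAt.const_add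
    exact (hasFDerivAt_id y).const_mul (t : ℂ)
  have h2 := (hg.diff (x + t * y)).hasFDerivAt.comp y h1
  have h3 : fderiv ℝ (fun y => g (x + t * y)) y = _ := h2.fderiv
  unfold pd
  rw [h3]
  simp only [ContinuousLinearMap.comp_apply]
  have : ((t : ℂ) • ContinuousLinearMap.id ℝ ℂ) v = t • v := by simp
  rw [this, map_smul]; simp

/-- moving derivatives on the test function -/
lemma move_pd {φ : ℂ → ℂ} (hφ : Sm φ) {R : ℝ} (hs : tsupport φ ⊆ Metric.closedBall 0 R) (v : ℂ)
    (n : ℕ) : ∃ ψ : ℂ → ℂ, Sm ψ ∧ tsupport ψ ⊆ Metric.closedBall 0 R ∧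
      ∀ f : ℂ → ℂ, Sm f → ∀ x, ∫ y, φ y * (pd v)^[n] f (x + y) = ∫ y, ψ y * f (x + y) := by
  induction n with
  | zero => exact ⟨φ, hφ, hs, fun f _ x => rfl⟩
  | succ n ih =>
    obtain ⟨ψ, h1, h2, h3⟩ := ih
    refine ⟨fun y => - pd v ψ y, (h1.pd v).neg, ?_, ?_⟩
    · have : tsupport (fun y => - pd v ψ y) ⊆ tsupport ψ := by
        have e : tsupport (fun y => - pd v ψ y) = tsupport (pd v ψ) := by
          unfold tsupport; congr 1; ext y; simp
        rw [e]
        exact tsupport_fderiv_apply_subset ℝ v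
      exact this.trans h2
    · intro f hf x
      rw [Function.iterate_succ_apply, h3 _ (hf.pd v)]
      have hc : HasCompactSupport ψ :=
        HasCompactSupport.of_support_subset_isCompact (isCompact_closedBall 0 R)
          ((subset_tsupport _).trans h2)
      have := ibp h1 hc (hf.comp_aff x 1) v
      simp only [pd_comp_aff hf] at this
      simp only [Complex.ofReal_one, one_mul] at this
      rw [this, ← integral_neg]
      simp

lemma move_pdi {φ : ℂ → ℂ} (hφ : Sm φ) {R : ℝ} (hs : tsupport φ ⊆ Metric.closedBall 0 R)
    (a b : ℕ) : ∃ ψ : ℂ → ℂ, Sm ψ ∧ tsupport ψ ⊆ Metric.closedBall 0 R ∧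
      ∀ f : ℂ → ℂ, Sm f → ∀ x, ∫ y, φ y * pdi a b f (x + y) = ∫ y, ψ y * f (x + y) := by
  obtain ⟨ψ, h1, h2, h3⟩ := move_pd hφ hs 1 a
  obtain ⟨ψ', h1', h2', h3'⟩ := move_pd h1 h2 I b
  refine ⟨ψ', h1', h2', fun f hf x => ?_⟩
  rw [← h3' f hf, ← h3 _ (hf.pd_iter I b)]
  rfl

lemma exists_kernel_s16 {R : ℝ} (hR : 0 < R) : ∃ φ Ψ : ℂ → ℂ, Sm φ ∧ Sm Ψ ∧
    tsupport φ ⊆ Metric.closedBall 0 R ∧ tsupport Ψ ⊆ Metric.closedBall 0 R ∧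
    (∀ y, pd 1 Ψ y = -(φ y * y.re)) ∧ (∀ y, pd I Ψ y = -(φ y * y.im)) ∧ ∫ y, φ y ≠ 0 := by
  set u : ℂ → ℝ := fun y => R ^ 2 - (y.re ^ 2 + y.im ^ 2) with hu
  have hre : ContDiff ℝ (⊤ : ℕ∞) (fun y : ℂ => y.re) := Complex.reCLM.contDiff
  have him : ContDiff ℝ (⊤ : ℕ∞) (fun y : ℂ => y.im) := Complex.imCLM.contDiff
  have huS : ContDiff ℝ (⊤ : ℕ∞) u := contDiff_const.sub ((hre.pow 2).add (him.pow 2))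
  set e : ℝ → ℝ := fun s => (s⁻¹) ^ 2 * expNegInvGlue s with he
  have heS : ContDiff ℝ (⊤ : ℕ∞) e := by
    have := expNegInvGlue.contDiff_polynomial_eval_inv_mul (n := ⊤) (Polynomial.X ^ 2)
    simpa [he] using this
  have hed : ∀ s, HasDerivAt expNegInvGlue (e s) s := by
    intro s
    have := expNegInvGlue.hasDerivAt_polynomial_eval_inv_mul 1 s
    simpa [he] using this
  have hfar : ∀ y : ℂ, y ∉ Metric.closedBall (0:ℂ) R → u y ≤ 0 := by
    intro y hy
    simp only [Metric.mem_closedBall, dist_zero_right, not_le] at hy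
    have h1 : ‖y‖ ^ 2 = y.re ^ 2 + y.im ^ 2 := by
      rw [Complex.sq_norm, Complex.normSq_apply]; ring
    simp only [hu]
    nlinarith
  have hsupp : ∀ h : ℝ → ℝ, (∀ s ≤ 0, h s = 0) →
      tsupport (fun y => ((h (u y) : ℝ) : ℂ)) ⊆ Metric.closedBall 0 R := by
    intro h hh
    refine closure_minimal ?_ Metric.isClosed_closedBall
    intro y hy
    by_contra hn
    exact hy (by simp [hh _ (hfar y hn)])
  have he0 : ∀ s ≤ 0, e s = 0 := by
    intro s hs; simp [he, expNegInvGlue.zero_of_nonpos hs]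
  have hofr : ∀ h : ℝ → ℝ, ContDiff ℝ (⊤ : ℕ∞) h → Sm (fun y => ((h (u y) : ℝ) : ℂ)) := by
    intro h hh
    exact Complex.ofRealCLM.contDiff.comp (hh.comp huS)
  have hder : ∀ v y : ℂ, pd v (fun y => ((expNegInvGlue (u y) : ℝ) : ℂ)) y =
      ((e (u y) * (-(2 * y.re * v.re + 2 * y.im * v.im)) : ℝ) : ℂ) := by
    intro v y
    have h1 : HasFDerivAt (fun y : ℂ => y.re) Complex.reCLM y := Complex.reCLM.hasFDerivAt
    have h2 : HasFDerivAt (fun y : ℂ => y.im) Complex.imCLM y := Complex.imCLM.hasFDerivAt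
    have h3 := ((h1.pow 2).add (h2.pow 2)).const_sub (R ^ 2)
    have h4 := (hed (u y)).comp_hasFDerivAt y h3
    have h5 := Complex.ofRealCLM.hasFDerivAt.comp y h4
    have h6 : fderiv ℝ (fun y => ((expNegInvGlue (u y) : ℝ) : ℂ)) y = _ := h5.fderiv
    unfold pd
    rw [h6]
    simp
    ring
  have hφS := hofr (fun s => 2 * e s) (contDiff_const.mul heS)
  have hφs := hsupp (fun s => 2 * e s) (fun s hs => by simp [he0 s hs])
  refine ⟨fun y => ((2 * e (u y) : ℝ) : ℂ), fun y => ((expNegInvGlue (u y) : ℝ) : ℂ),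
    hφS, hofr _ expNegInvGlue.contDiff, hφs, hsupp _ (fun s hs => expNegInvGlue.zero_of_nonpos hs),
    ?_, ?_, ?_⟩
  · intro y; rw [hder]; push_cast; simp; ring
  · intro y; rw [hder]; push_cast; simp; ring
  · beta_reduce
    rw [integral_complex_ofReal]
    have hpos : 0 < ∫ y, 2 * e (u y) := by
      have hc : Continuous (fun y => 2 * e (u y)) :=
        continuous_const.mul (heS.continuous.comp huS.continuous)
      apply hc.integral_pos_of_hasCompactSupport_nonneg_nonzero (x := 0)
      · apply HasCompactSupport.of_support_subset_isCompact (isCompact_closedBall (0:ℂ) R)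
        intro y hy
        by_contra hn
        exact hy (by simp [he0 _ (hfar y hn)])
      · intro y
        have := expNegInvGlue.nonneg (u y)
        simp only [he, Pi.zero_apply]; positivity
      · have h0 : 0 < u 0 := by simp [hu]; positivity
        have := expNegInvGlue.pos_of_pos h0
        simp only [he]; positivity
    exact_mod_cast hpos.ne'

lemma fderiv_eq_pd {g : ℂ → ℂ} (z y : ℂ) :
    fderiv ℝ g z y = y.re * pd 1 g z + y.im * pd I g z := by
  have : y = y.re • (1:ℂ) + y.im • I := by simp [Complex.re_add_im]
  conv_lhs => rw [this]
  rw [map_add, map_smul, map_smul]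
  simp [pd]

lemma ftc_line {g : ℂ → ℂ} (hg : Sm g) (x y : ℂ) :
    g (x + y) - g x = ∫ t in (0:ℝ)..1, fderiv ℝ g (x + t * y) y := by
  have hd : ∀ t ∈ Set.uIcc (0:ℝ) 1,
      HasDerivAt (fun t : ℝ => g (x + t * y)) (fderiv ℝ g (x + t * y) y) t := by
    intro t _
    have h1 : HasDerivAt (fun t : ℝ => x + t * y) y t := by
      have := ((hasDerivAt_id t).ofReal_comp.mul_const y).const_add x
      simpa using this
    exact (hg.diff (x + t * y)).hasFDerivAt.comp_hasDerivAt t h1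
  have hcont : Continuous (fun t : ℝ => fderiv ℝ g (x + t * y) y) := by
    have : Continuous (pd y g) := (hg.pd y).cont
    exact this.comp (by fun_prop)
  rw [intervalIntegral.integral_eq_sub_of_hasDerivAt hd (hcont.intervalIntegrable _ _)]
  simp

lemma mean_value {R : ℝ} {φ Ψ : ℂ → ℂ} (hφ : Sm φ) (hΨ : Sm Ψ)
    (hsφ : tsupport φ ⊆ Metric.closedBall 0 R) (hsΨ : tsupport Ψ ⊆ Metric.closedBall 0 R)
    (h1 : ∀ y, pd 1 Ψ y = -(φ y * y.re)) (h2 : ∀ y, pd I Ψ y = -(φ y * y.im))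
    {g : ℂ → ℂ} (hg : Sm g) (x : ℂ) {S : ℝ}
    (hS : ∀ z ∈ Metric.closedBall x R, ‖lap g z‖ ≤ S) :
    ‖(∫ y, φ y * g (x + y)) - (∫ y, φ y) * g x‖ ≤ (∫ y, ‖Ψ y‖) * S := by
  have hcφ : HasCompactSupport φ :=
    HasCompactSupport.of_support_subset_isCompact (isCompact_closedBall 0 R)
      ((subset_tsupport _).trans hsφ)
  have hcΨ : HasCompactSupport Ψ :=
    HasCompactSupport.of_support_subset_isCompact (isCompact_closedBall 0 R)
      ((subset_tsupport _).trans hsΨ)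
  have hz : ∀ y ∉ Metric.closedBall (0:ℂ) R, φ y = 0 := fun y hy =>
    image_eq_zero_of_notMem_tsupport (fun h => hy (hsφ h))
  have hzΨ : ∀ y ∉ Metric.closedBall (0:ℂ) R, Ψ y = 0 := fun y hy =>
    image_eq_zero_of_notMem_tsupport (fun h => hy (hsΨ h))
  set F : ℝ → ℂ → ℂ := fun t y => φ y * fderiv ℝ g (x + t * y) y with hF
  have hFc : Continuous (Function.uncurry F) := by
    have : Continuous (fun p : ℝ × ℂ => fderiv ℝ g (x + p.1 * p.2) p.2) := by
      have e : Continuous (fderiv ℝ g) := hg.continuous_fderiv (by simp)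
      exact (e.comp (by fun_prop)).clm_apply continuous_snd
    exact (hφ.cont.comp continuous_snd).mul this
  have e1 : (∫ y, φ y * g (x + y)) - (∫ y, φ y) * g x = ∫ y, φ y * (g (x + y) - g x) := by
    rw [← integral_mul_const, ← integral_sub]
    · congr 1; funext y; ring
    · exact (hφ.cont.mul (hg.cont.comp (by fun_prop))).integrable_of_hasCompactSupport hcφ.mul_right
    · exact (hφ.cont.mul continuous_const).integrable_of_hasCompactSupport hcφ.mul_right
  have e2 : ∫ y, φ y * (g (x + y) - g x) =
      ∫ y in Metric.closedBall 0 R, ∫ t in (0:ℝ)..1, F t y := by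
    rw [setIntegral_eq_integral_of_forall_compl_eq_zero]
    · congr 1; funext y
      rw [ftc_line hg, hF, intervalIntegral.integral_const_mul]
    · intro y hy; simp [hF, hz y hy]
  have e3 : ∫ y in Metric.closedBall 0 R, ∫ t in (0:ℝ)..1, F t y =
      ∫ t in (0:ℝ)..1, ∫ y in Metric.closedBall 0 R, F t y := by
    rw [intervalIntegral_integral_swap]
    rw [Measure.prod_restrict, ← Measure.volume_eq_prod]
    have : IntegrableOn (Function.uncurry F) (Set.uIcc 0 1 ×ˢ Metric.closedBall (0:ℂ) R) volume :=
      hFc.continuousOn.integrableOn_compact (isCompact_uIcc.prod (isCompact_closedBall _ _))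
    exact this.mono_set (Set.prod_mono Set.uIoc_subset_uIcc le_rfl)
  have e4 : ∀ t : ℝ, ∫ y in Metric.closedBall 0 R, F t y =
      t * ∫ y, Ψ y * lap g (x + t * y) := by
    intro t
    rw [setIntegral_eq_integral_of_forall_compl_eq_zero
      (by intro y hy; simp [hF, hz y hy])]
    have hint : ∀ v, Integrable (fun y => pd v Ψ y * pd v g (x + t * y)) := fun v =>
      ((hΨ.pd v).cont.mul ((hg.pd v).comp_aff x t).cont).integrable_of_hasCompactSupport
        (HasCompactSupport.mul_right (hcΨ.fderiv_apply ℝ v))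
    have hint2 : ∀ v, Integrable (fun y => Ψ y * (t * pd v (pd v g) (x + t * y))) := fun v =>
      (hΨ.cont.mul (continuous_const.mul
        (((hg.pd v).pd v).comp_aff x t).cont)).integrable_of_hasCompactSupport
        hcΨ.mul_right
    have hi : ∀ v, ∫ y, Ψ y * (t * pd v (pd v g) (x + t * y)) =
        - ∫ y, pd v Ψ y * pd v g (x + t * y) := by
      intro v
      have := ibp hΨ hcΨ ((hg.pd v).comp_aff x t) v
      simpa only [pd_comp_aff (hg.pd v)] using this
    have : ∀ y, F t y = -(pd 1 Ψ y * pd 1 g (x + t * y)) + -(pd I Ψ y * pd I g (x + t * y)) := by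
      intro y
      simp only [hF]
      rw [fderiv_eq_pd, h1, h2]; ring
    simp only [this]
    rw [integral_add (by exact (hint 1).neg) (by exact (hint I).neg), integral_neg, integral_neg, ← hi, ← hi,
      ← integral_add (hint2 1) (hint2 I), ← integral_const_mul]
    congr 1; funext y
    rw [lap_eq]; ring
  rw [e1, e2, e3]
  have bound : ∀ t ∈ Set.uIoc (0:ℝ) 1, ‖∫ y in Metric.closedBall 0 R, F t y‖ ≤
      (∫ y, ‖Ψ y‖) * S := by
    intro t ht
    rw [Set.uIoc_of_le zero_le_one] at ht
    rw [e4, norm_mul, Complex.norm_real, Real.norm_of_nonneg ht.1.le]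
    have hb : ‖∫ y, Ψ y * lap g (x + t * y)‖ ≤ (∫ y, ‖Ψ y‖) * S := by
      rw [← integral_mul_const]
      apply norm_integral_le_of_norm_le
      · exact (hΨ.cont.norm.mul continuous_const).integrable_of_hasCompactSupport
          (HasCompactSupport.mul_right hcΨ.norm)
      · refine Filter.Eventually.of_forall fun y => ?_
        rw [norm_mul]
        by_cases hy : y ∈ Metric.closedBall (0:ℂ) R
        · apply mul_le_mul_of_nonneg_left _ (norm_nonneg _)
          apply hS
          simp only [Metric.mem_closedBall, dist_zero_right] at hy
          simp only [Metric.mem_closedBall, dist_self_add_left, norm_mul, Complex.norm_real,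
            Real.norm_of_nonneg ht.1.le]
          nlinarith [norm_nonneg y, ht.1, ht.2]
        · simp [hzΨ y hy]
    calc _ ≤ 1 * ‖∫ y, Ψ y * lap g (x + t * y)‖ := by
          gcongr; exact ht.2
      _ ≤ _ := by rw [one_mul]; exact hb
  have := intervalIntegral.norm_integral_le_of_norm_le_const bound
  simpa using this

lemma oneD {h h' : ℝ → ℂ} (hd : ∀ t, HasDerivAt h (h' t) t) (hc : Continuous h') {r : ℝ}
    (hr : 0 < r) {x : ℝ} (hx : x ∈ Set.Icc (-r) r) :
    ‖h x‖ ≤ (1 / (2 * r)) * (∫ t in (-r)..r, ‖h t‖) + ∫ t in (-r)..r, ‖h' t‖ := by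
  have hh : Continuous h := continuous_iff_continuousAt.2 fun t => (hd t).continuousAt
  have hrr : -r ≤ r := by linarith
  have key : ∀ t ∈ Set.Icc (-r) r, ‖h x‖ - (∫ t in (-r)..r, ‖h' t‖) ≤ ‖h t‖ := by
    intro t ht
    have e : h x - h t = ∫ s in t..x, h' s :=
      (intervalIntegral.integral_eq_sub_of_hasDerivAt (fun s _ => hd s)
        (hc.intervalIntegrable _ _)).symm
    have e2 : ‖∫ s in t..x, h' s‖ ≤ ∫ t in (-r)..r, ‖h' t‖ := by
      refine intervalIntegral.norm_integral_le_integral_norm_uIoc.trans ?_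
      rw [intervalIntegral.integral_of_le hrr]
      apply setIntegral_mono_set
      · exact (hc.norm.integrableOn_Icc (a := -r) (b := r)).mono_set Set.Ioc_subset_Icc_self
      · exact Filter.Eventually.of_forall fun _ => norm_nonneg _
      · apply Filter.Eventually.of_forall
        intro s hs
        have hs' : s ∈ Set.uIoc t x := hs
        rw [Set.mem_uIoc] at hs'
        show s ∈ Set.Ioc (-r) r
        rcases hs' with h | h <;> constructor <;> linarith [h.1, h.2, hx.1, hx.2, ht.1, ht.2]
    have : ‖h x‖ ≤ ‖h t‖ + ‖h x - h t‖ := by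
      have := norm_add_le (h t) (h x - h t); simpa using this
    rw [e] at this
    linarith
  have := intervalIntegral.integral_mono_on hrr (μ := volume)
    (f := fun _ => ‖h x‖ - (∫ t in (-r)..r, ‖h' t‖)) (g := fun t => ‖h t‖)
    (continuous_const.intervalIntegrable _ _) (hh.norm.intervalIntegrable _ _) key
  rw [intervalIntegral.integral_const, smul_eq_mul] at this
  have h2 : ‖h x‖ - (∫ t in (-r)..r, ‖h' t‖) ≤ (1 / (2 * r)) * ∫ t in (-r)..r, ‖h t‖ := by
    rw [div_mul_eq_mul_div, le_div_iff₀ (by positivity)]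
    linarith
  linarith

lemma Qc_preimage (r : ℝ) :
    Qc r = Complex.measurableEquivRealProd ⁻¹' (Set.Icc (-r) r ×ˢ Set.Icc (-r) r) := by
  ext z
  simp only [Qc, Set.mem_setOf_eq, abs_le, Set.mem_preimage, Complex.measurableEquivRealProd_apply,
    Set.mem_prod, Set.mem_Icc]

lemma isCompact_Qc (r : ℝ) : IsCompact (Qc r) := by
  apply Metric.isCompact_of_isClosed_isBounded
  · exact (isClosed_le (Complex.continuous_re.abs) continuous_const).inter
      (isClosed_le (Complex.continuous_im.abs) continuous_const)
  · rw [isBounded_iff_forall_norm_le]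
    refine ⟨r + r, fun z hz => ?_⟩
    exact (Complex.norm_le_abs_re_add_abs_im z).trans (add_le_add hz.1 hz.2)

lemma integral_Qc {H : ℂ → ℝ} (hH : Continuous H) {r : ℝ} (hr : 0 < r) :
    ∫ z in Qc r, H z = ∫ s in (-r)..r, ∫ t in (-r)..r, H ⟨s, t⟩ := by
  have hrr : -r ≤ r := by linarith
  have hc : Continuous (fun p : ℝ × ℝ => H ⟨p.1, p.2⟩) :=
    hH.comp Complex.equivRealProdCLM.symm.continuous
  rw [Qc_preimage]
  have := Complex.volume_preserving_equiv_real_prod.setIntegral_preimage_emb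
    Complex.measurableEquivRealProd.measurableEmbedding (fun p : ℝ × ℝ => H ⟨p.1, p.2⟩)
    (Set.Icc (-r) r ×ˢ Set.Icc (-r) r)
  simp only [Complex.measurableEquivRealProd_apply] at this
  rw [this, Measure.volume_eq_prod, setIntegral_prod]
  · rw [intervalIntegral.integral_of_le hrr, integral_Icc_eq_integral_Ioc]
    congr 1; funext s
    rw [intervalIntegral.integral_of_le hrr, integral_Icc_eq_integral_Ioc]
  · rw [← Measure.volume_eq_prod]
    exact hc.continuousOn.integrableOn_compact (isCompact_Icc.prod isCompact_Icc)

lemma hasDerivAt_vert {g : ℂ → ℂ} (hg : Sm g) (s t : ℝ) :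
    HasDerivAt (fun t : ℝ => g ⟨s, t⟩) (pd I g ⟨s, t⟩) t := by
  have h1 : HasDerivAt (fun t : ℝ => (⟨s, t⟩ : ℂ)) I t := by
    have := ((hasDerivAt_id t).ofReal_comp.mul_const I).const_add (s : ℂ)
    simp only [id, Complex.ofReal_one, one_mul] at this
    refine this.congr_of_eventuallyEq (Filter.Eventually.of_forall fun y => ?_)
    exact Complex.mk_eq_add_mul_I s y
  exact (hg.diff _).hasFDerivAt.comp_hasDerivAt t h1

lemma hasDerivAt_horiz {g : ℂ → ℂ} (hg : Sm g) (s t : ℝ) :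
    HasDerivAt (fun s : ℝ => g ⟨s, t⟩) (pd 1 g ⟨s, t⟩) s := by
  have h1 : HasDerivAt (fun s : ℝ => (⟨s, t⟩ : ℂ)) 1 s := by
    have := (hasDerivAt_id s).ofReal_comp.add_const (t * I : ℂ)
    simp only [id, Complex.ofReal_one] at this
    refine this.congr_of_eventuallyEq (Filter.Eventually.of_forall fun y => ?_)
    exact Complex.mk_eq_add_mul_I y t
  exact (hg.diff _).hasFDerivAt.comp_hasDerivAt s h1

lemma cont_mk {X : Type*} [TopologicalSpace X] {a b : X → ℝ} (ha : Continuous a)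
    (hb : Continuous b) : Continuous (fun x => (⟨a x, b x⟩ : ℂ)) :=
  Complex.equivRealProdCLM.symm.continuous.comp (ha.prodMk hb)

lemma sob {g : ℂ → ℂ} (hg : Sm g) {r : ℝ} (hr : 0 < r) {B : ℝ}
    (h0 : ∫ z in Qc r, ‖g z‖ ≤ B) (h1 : ∫ z in Qc r, ‖pd 1 g z‖ ≤ B)
    (h2 : ∫ z in Qc r, ‖pd I g z‖ ≤ B) (h3 : ∫ z in Qc r, ‖pd I (pd 1 g) z‖ ≤ B)
    {z : ℂ} (hz : z ∈ Qc r) : ‖g z‖ ≤ (1 / (2 * r) + 1) ^ 2 * B := by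
  have hrr : -r ≤ r := by linarith
  set c := 1 / (2 * r) with hcdef
  have hc : 0 < c := by positivity
  have hre : z.re ∈ Set.Icc (-r) r := abs_le.1 hz.1
  have him : z.im ∈ Set.Icc (-r) r := abs_le.1 hz.2
  have step : ∀ G : ℂ → ℂ, Sm G → ∫ w in Qc r, ‖G w‖ ≤ B → ∫ w in Qc r, ‖pd I G w‖ ≤ B →
      ∫ s in (-r)..r, ‖G ⟨s, z.im⟩‖ ≤ c * B + B := by
    intro G hG hA hB
    rw [integral_Qc hG.cont.norm hr] at hA
    rw [integral_Qc (hG.pd I).cont.norm hr] at hB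
    have hcc : ∀ F : ℂ → ℂ, Sm F → Continuous (fun s : ℝ => ∫ t in (-r)..r, ‖F ⟨s, t⟩‖) := by
      intro F hF
      apply intervalIntegral.continuous_parametric_intervalIntegral_of_continuous'
      exact (hF.cont.comp (cont_mk continuous_fst continuous_snd)).norm
    calc ∫ s in (-r)..r, ‖G ⟨s, z.im⟩‖
        ≤ ∫ s in (-r)..r, (c * (∫ t in (-r)..r, ‖G ⟨s, t⟩‖) + ∫ t in (-r)..r, ‖pd I G ⟨s, t⟩‖) := by
          apply intervalIntegral.integral_mono_on hrr
          · exact ((hG.cont.comp (cont_mk continuous_id continuous_const)).norm).intervalIntegrable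
              _ _
          · exact ((continuous_const.mul (hcc _ hG)).add (hcc _ (hG.pd I))).intervalIntegrable _ _
          · intro s _
            exact oneD (fun t => hasDerivAt_vert hG s t)
              ((hG.pd I).cont.comp (cont_mk continuous_const continuous_id)) hr him
      _ = c * (∫ s in (-r)..r, ∫ t in (-r)..r, ‖G ⟨s, t⟩‖) +
            ∫ s in (-r)..r, ∫ t in (-r)..r, ‖pd I G ⟨s, t⟩‖ := by
          rw [intervalIntegral.integral_add, intervalIntegral.integral_const_mul]
          · exact (continuous_const.mul (hcc _ hG)).intervalIntegrable _ _
          · exact (hcc _ (hG.pd I)).intervalIntegrable _ _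
      _ ≤ c * B + B := by gcongr
  have := oneD (fun s => hasDerivAt_horiz hg s z.im)
    ((hg.pd 1).cont.comp (cont_mk continuous_id continuous_const)) hr hre
  have a1 := step g hg h0 h2
  have a2 := step _ (hg.pd 1) h1 h3
  calc ‖g z‖ ≤ c * (∫ s in (-r)..r, ‖g ⟨s, z.im⟩‖) + ∫ s in (-r)..r, ‖pd 1 g ⟨s, z.im⟩‖ := this
    _ ≤ c * (c * B + B) + (c * B + B) := by gcongr
    _ = _ := by ring

lemma holder_Qc (q : ℕ) (hq : 1 ≤ q) (r : ℝ) : ∃ V : ℝ, 0 ≤ V ∧ ∀ h : ℂ → ℂ, Continuous h →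
    ∫ z in Qc r, ‖h z‖ ≤ V * (∫ z in Qc r, ‖h z‖ ^ (q : ℝ)) ^ (1 / (q : ℝ)) := by
  rcases hq.eq_or_lt with h1 | h1
  · subst h1
    exact ⟨1, zero_le_one, fun h hh => by simp⟩
  · have hq1 : (1 : ℝ) < q := by exact_mod_cast h1
    have hpq := Real.HolderConjugate.conjExponent hq1
    set p := Real.conjExponent q
    refine ⟨(∫ z in Qc r, ‖(1:ℂ)‖ ^ p) ^ (1 / p), by positivity, fun h hh => ?_⟩
    have : IsFiniteMeasure (volume.restrict (Qc r)) :=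
      ⟨by simpa using (isCompact_Qc r).measure_lt_top⟩
    have := integral_mul_norm_le_Lp_mul_Lq (μ := volume.restrict (Qc r)) hpq (f := h)
      (g := fun _ => (1:ℂ)) ?_ (memLp_const _)
    · rw [mul_comm]; simpa using this
    · obtain ⟨C, hC⟩ := (isCompact_Qc r).exists_bound_of_continuousOn hh.continuousOn
      apply MemLp.of_bound hh.aestronglyMeasurable C
      exact (ae_restrict_iff' (isCompact_Qc r).isClosed.measurableSet).2
        (Filter.Eventually.of_forall hC)

lemma closedBall_sub_Qc {r₀ r₁ : ℝ} {x : ℂ} (hx : x ∈ Qc r₀) :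
    Metric.closedBall x (r₁ - r₀) ⊆ Qc r₁ := by
  intro z hz
  rw [Metric.mem_closedBall, dist_eq_norm] at hz
  have h1 := (Complex.abs_re_le_norm (z - x)).trans hz
  have h2 := (Complex.abs_im_le_norm (z - x)).trans hz
  simp only [Complex.sub_re, Complex.sub_im, abs_le] at h1 h2
  obtain ⟨h3, h4⟩ := hx
  rw [abs_le] at h3 h4
  exact ⟨abs_le.2 ⟨by linarith, by linarith⟩, abs_le.2 ⟨by linarith, by linarith⟩⟩

lemma test_bound {ψ : ℂ → ℂ} (hψ : Sm ψ) {r₀ r₁ : ℝ}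
    (hs : tsupport ψ ⊆ Metric.closedBall 0 (r₁ - r₀)) :
    ∃ K : ℝ, 0 ≤ K ∧ ∀ f : ℂ → ℂ, Continuous f → ∀ x ∈ Qc r₀,
      ‖∫ y, ψ y * f (x + y)‖ ≤ K * ∫ z in Qc r₁, ‖f z‖ := by
  have hc : HasCompactSupport ψ :=
    HasCompactSupport.of_support_subset_isCompact (isCompact_closedBall 0 _)
      ((subset_tsupport _).trans hs)
  obtain ⟨K, hK⟩ := hψ.cont.bounded_above_of_compact_support hc
  have hK0 : 0 ≤ K := (norm_nonneg _).trans (hK 0)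
  refine ⟨K, hK0, fun f hf x hx => ?_⟩
  have e : ∫ y, ψ y * f (x + y) = ∫ z, ψ (z - x) * f z := by
    rw [← integral_add_left_eq_self (fun z => ψ (z - x) * f z) x]
    simp
  have hm := (isCompact_Qc r₁).isClosed.measurableSet
  rw [e, ← integral_const_mul]
  rw [← setIntegral_eq_integral_of_forall_compl_eq_zero (s := Qc r₁)]
  · apply norm_integral_le_of_norm_le
    · exact (continuous_const.mul hf.norm).continuousOn.integrableOn_compact (isCompact_Qc r₁)
    · refine Filter.Eventually.of_forall fun z => ?_
      rw [norm_mul]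
      gcongr
      exact hK _
  · intro z hz
    rw [image_eq_zero_of_notMem_tsupport (f := ψ), zero_mul]
    intro h
    apply hz
    apply closedBall_sub_Qc hx
    have := hs h
    simpa [dist_eq_norm] using this

theorem core (q : ℕ) (hq : 1 ≤ q) (r₀ r₁ : ℝ) (h0 : 0 < r₀) (h01 : r₀ < r₁) (a b : ℕ) :
    ∃ C : ℝ, 0 ≤ C ∧ ∀ f : ℂ → ℂ, Sm f → ∀ A B : ℝ,
        (∫ z in Qc r₁, ‖f z‖ ^ (q : ℝ)) ^ (1 / (q : ℝ)) ≤ A →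
        (∀ a' b' : ℕ, a' + b' ≤ a + b + 2 →
          (∫ z in Qc r₁, ‖pdi a' b' (lap f) z‖ ^ (q : ℝ)) ^ (1 / (q : ℝ)) ≤ B) →
        ∀ x ∈ Qc r₀, ‖pdi a b f x‖ ≤ C * (A + B) := by
  have hr1 : 0 < r₁ := h0.trans h01
  obtain ⟨φ, Ψ, hφ, hΨ, hsφ, hsΨ, hd1, hd2, hne⟩ := exists_kernel_s16 (sub_pos.2 h01)
  obtain ⟨ψ, hψ, hsψ, hmove⟩ := move_pdi hφ hsφ a b
  obtain ⟨K, hK0, hK⟩ := test_bound hψ hsψ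
  obtain ⟨V, hV0, hV⟩ := holder_Qc q hq r₁
  set c := ‖∫ y, φ y‖ with hc
  have hcpos : 0 < c := norm_pos_iff.2 hne
  set N := ∫ y, ‖Ψ y‖ with hN
  have hN0 : 0 ≤ N := integral_nonneg fun _ => norm_nonneg _
  set D := (1 / (2 * r₁) + 1) ^ 2 with hD
  have hD0 : 0 ≤ D := by positivity
  refine ⟨(K * V + N * (D * V)) / c, by positivity, fun f hf A B hA hB x hx => ?_⟩
  have hA0 : 0 ≤ A := le_trans (by positivity) hA
  have hB0 : 0 ≤ B := le_trans (by positivity) (hB 0 0 (by omega))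
  have hL : ∀ a' b' : ℕ, a' + b' ≤ a + b + 2 → ∫ z in Qc r₁, ‖pdi a' b' (lap f) z‖ ≤ V * B := by
    intro a' b' h
    exact (hV _ (hf.lap.pdi a' b').cont).trans (mul_le_mul_of_nonneg_left (hB a' b' h) hV0)
  have hS : ∀ z ∈ Qc r₁, ‖lap (pdi a b f) z‖ ≤ D * (V * B) := by
    intro z hz
    rw [lap_pdi hf]
    apply sob (hf.lap.pdi a b) hr1 (hL a b (by omega)) _ _ _ hz
    · rw [pd_one_pdi]; exact hL _ _ (by omega)
    · rw [pd_I_pdi hf.lap]; exact hL _ _ (by omega)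
    · rw [pd_one_pdi, pd_I_pdi hf.lap]; exact hL _ _ (by omega)
  have m1 := mean_value hφ hΨ hsφ hsΨ hd1 hd2 (hf.pdi a b) x
    (fun z hz => hS z (closedBall_sub_Qc hx hz))
  rw [hmove f hf x] at m1
  have m2 : ‖∫ y, ψ y * f (x + y)‖ ≤ K * (V * A) :=
    (hK f hf.cont x hx).trans (mul_le_mul_of_nonneg_left
      ((hV f hf.cont).trans (mul_le_mul_of_nonneg_left hA hV0)) hK0)
  have m3 : c * ‖pdi a b f x‖ ≤ K * (V * A) + N * (D * (V * B)) := by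
    rw [hc, ← norm_mul]
    have := norm_sub_le (∫ y, ψ y * f (x + y))
      ((∫ y, ψ y * f (x + y)) - (∫ y, φ y) * pdi a b f x)
    rw [sub_sub_cancel] at this
    linarith
  rw [div_mul_eq_mul_div, le_div_iff₀ hcpos]
  have p1 : 0 ≤ K * V * B := by positivity
  have p2 : 0 ≤ N * (D * V) * A := by positivity
  nlinarith

lemma isOpen_Qo (r : ℝ) : IsOpen (Qo r) :=
  (isOpen_lt (Complex.continuous_re.abs) continuous_const).inter
    (isOpen_lt (Complex.continuous_im.abs) continuous_const)

lemma extend {f : ℂ → ℂ} {r₁ r₂ : ℝ} (h1 : 0 < r₁) (h12 : r₁ < r₂)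
    (hf : ContDiffOn ℝ (⊤ : ℕ∞) f (Qo r₂)) :
    ∃ g : ℂ → ℂ, Sm g ∧ ∃ U : Set ℂ, IsOpen U ∧ Qc r₁ ⊆ U ∧ Set.EqOn f g U := by
  let β : ContDiffBump (0:ℝ) :=
    ⟨r₁ + (r₂ - r₁) / 3, r₁ + 2 * (r₂ - r₁) / 3, by linarith, by linarith⟩
  let χ : ℂ → ℂ := fun z => ((β z.re * β z.im : ℝ) : ℂ)
  have hχ : Sm χ := by
    have hre : ContDiff ℝ (⊤ : ℕ∞) (fun y : ℂ => y.re) := Complex.reCLM.contDiff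
    have him : ContDiff ℝ (⊤ : ℕ∞) (fun y : ℂ => y.im) := Complex.imCLM.contDiff
    exact Complex.ofRealCLM.contDiff.comp ((β.contDiff.comp hre).mul (β.contDiff.comp him))
  have hts : tsupport χ ⊆ Qc (r₁ + 2 * (r₂ - r₁) / 3) := by
    apply closure_minimal _ (isCompact_Qc _).isClosed
    intro z hz
    have hne : β z.re * β z.im ≠ 0 := fun h => hz (by simp only [χ, h, Complex.ofReal_zero])
    have e1 : z.re ∈ Function.support β := left_ne_zero_of_mul hne
    have e2 : z.im ∈ Function.support β := right_ne_zero_of_mul hne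
    rw [β.support_eq] at e1 e2
    simp only [Metric.mem_ball, dist_zero_right, Real.norm_eq_abs] at e1 e2
    exact ⟨e1.le, e2.le⟩
  refine ⟨fun z => χ z * f z, ?_, Qo (r₁ + (r₂ - r₁) / 3), isOpen_Qo _, ?_, ?_⟩
  · refine contDiff_iff_contDiffAt.2 fun z => ?_
    by_cases hz : z ∈ Qo r₂
    · exact hχ.contDiffAt.mul (hf.contDiffAt ((isOpen_Qo _).mem_nhds hz))
    · have hz' : z ∉ tsupport χ := by
        intro h
        apply hz
        have := hts h
        exact ⟨lt_of_le_of_lt this.1 (by linarith), lt_of_le_of_lt this.2 (by linarith)⟩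
      have : (fun z => χ z * f z) =ᶠ[nhds z] fun _ => 0 := by
        filter_upwards [(isClosed_tsupport χ).isOpen_compl.mem_nhds hz'] with y hy
        rw [image_eq_zero_of_notMem_tsupport hy, zero_mul]
      exact contDiffAt_const.congr_of_eventuallyEq this
  · intro z hz
    exact ⟨lt_of_le_of_lt hz.1 (by linarith), lt_of_le_of_lt hz.2 (by linarith)⟩
  · intro z hz
    have e1 : β z.re = 1 := β.one_of_mem_closedBall (by
      simp only [Metric.mem_closedBall, dist_zero_right, Real.norm_eq_abs]; exact hz.1.le)
    have e2 : β z.im = 1 := β.one_of_mem_closedBall (by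
      simp only [Metric.mem_closedBall, dist_zero_right, Real.norm_eq_abs]; exact hz.2.le)
    simp [χ, e1, e2]

/-- local sup-norm estimate by `L^q`-norms via the Laplacian. For every `m` there
are `l ∈ ℕ` and `C > 0` such that for all `f ∈ C^∞(int Q_{r₂})` and `|α| ≤ m`,
`sup_{Q_{r₀}} |∂^α f| ≤ C (‖f‖_{L^q(Q_{r₁})} + sup_{|β| ≤ l} ‖∂^β Δ f‖_{L^q(Q_{r₁})})`
(with any upper bounds `A`, `B` of the two `L^q`-quantities). -/
theorem stmt16 (q : ℕ) (hq : 1 ≤ q) (r₀ r₁ r₂ : ℝ)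
    (h0 : 0 < r₀) (h01 : r₀ < r₁) (h12 : r₁ < r₂) (m : ℕ) :
    ∃ (l : ℕ) (C : ℝ), 0 < C ∧ ∀ f : ℂ → ℂ, ContDiffOn ℝ (⊤ : ℕ∞) f (Qo r₂) →
      ∀ A B : ℝ,
        (∫ z in Qc r₁, ‖f z‖ ^ (q : ℝ)) ^ (1 / (q : ℝ)) ≤ A →
        (∀ a b : ℕ, a + b ≤ l →
          (∫ z in Qc r₁, ‖pdi a b (lap f) z‖ ^ (q : ℝ)) ^ (1 / (q : ℝ)) ≤ B) →
        ∀ a b : ℕ, a + b ≤ m → ∀ x ∈ Qc r₀, ‖pdi a b f x‖ ≤ C * (A + B) := by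
  have hr1 : 0 < r₁ := h0.trans h01
  choose C hC0 hC using fun a b : ℕ => core q hq r₀ r₁ h0 h01 a b
  set T : ℝ := ∑ i ∈ Finset.range (m + 1), ∑ j ∈ Finset.range (m + 1), C i j with hT
  have hT0 : 0 ≤ T := Finset.sum_nonneg fun i _ => Finset.sum_nonneg fun j _ => hC0 i j
  refine ⟨m + 2, T + 1, by linarith, fun f hf A B hA hB a b hab x hx => ?_⟩
  obtain ⟨g, hg, U, hU, hQU, hfg⟩ := extend hr1 h12 hf
  have hm := (isCompact_Qc r₁).isClosed.measurableSet
  have hA' : (∫ z in Qc r₁, ‖g z‖ ^ (q : ℝ)) ^ (1 / (q : ℝ)) ≤ A := by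
    rw [← setIntegral_congr_fun (f := fun z => ‖f z‖ ^ (q : ℝ)) hm
      (fun z hz => by simp only [hfg (hQU hz)])]
    exact hA
  have hB' : ∀ a' b' : ℕ, a' + b' ≤ m + 2 →
      (∫ z in Qc r₁, ‖pdi a' b' (lap g) z‖ ^ (q : ℝ)) ^ (1 / (q : ℝ)) ≤ B := by
    intro a' b' h
    rw [← setIntegral_congr_fun (f := fun z => ‖pdi a' b' (lap f) z‖ ^ (q : ℝ)) hm
      (fun z hz => by simp only [pdi_congr hU (lap_congr hU hfg) a' b' (hQU hz)])]
    exact hB a' b' h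
  have hA0 : 0 ≤ A := le_trans (by positivity) hA
  have hB0 : 0 ≤ B := le_trans (by positivity) (hB 0 0 (by omega))
  have hxU : x ∈ U := hQU ⟨hx.1.trans h01.le, hx.2.trans h01.le⟩
  rw [pdi_congr hU hfg a b hxU]
  have key := hC a b g hg A B hA' (fun a' b' h => hB' a' b' (by omega)) x hx
  have hle : C a b ≤ T := by
    have s1 : C a b ≤ ∑ j ∈ Finset.range (m + 1), C a j :=
      Finset.single_le_sum (f := fun j => C a j) (fun j _ => hC0 a j)
        (Finset.mem_range.2 (by omega))
    exact s1.trans (Finset.single_le_sum (f := fun i => ∑ j ∈ Finset.range (m + 1), C i j)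
      (fun i _ => Finset.sum_nonneg fun j _ => hC0 i j) (Finset.mem_range.2 (by omega)))
  refine key.trans (mul_le_mul_of_nonneg_right (by linarith) (by linarith))
end
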